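/- arXiv:2007.05885 — 2 statements merged into one kernel-verified Lean document; each statement's English description precedes it below -/
import Mathlib

section
/- The poset P of conditions satisfies the countable chain condition, even when the underlying model N of PA is uncountable: every antichain in P is countable. -/
open FirstOrder FirstOrder.Language

/-- Function symbols of the language of arithmetic: `0`, `1`, `+`, `·`. -/
inductive arithFunc : ℕ → Type
  | zero : arithFunc 0
  | one : arithFunc 0
  | add : arithFunc 2
  | mul : arithFunc 2
  deriving DecidableEq

/-- Relation symbols of the language of arithmetic: `<`. -/
inductive arithRel : ℕ → Type
  | lt : arithRel 2
  deriving DecidableEq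

/-- The first-order language of arithmetic `{0, 1, +, ·, <}`. -/
def arith : FirstOrder.Language := ⟨arithFunc, arithRel⟩

namespace Arith

variable {M : Type*} [arith.Structure M]

/-- The interpretation of `0`. -/
def zeroM (M : Type*) [arith.Structure M] : M :=
  Structure.funMap (L := arith) arithFunc.zero ![]

/-- The interpretation of `1`. -/
def oneM (M : Type*) [arith.Structure M] : M :=
  Structure.funMap (L := arith) arithFunc.one ![]

/-- The interpretation of `+`. -/
def addM (x y : M) : M := Structure.funMap (L := arith) arithFunc.add ![x, y]

/-- The interpretation of `·`. -/
def mulM (x y : M) : M := Structure.funMap (L := arith) arithFunc.mul ![x, y]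

/-- The interpretation of `<`. -/
def ltM (x y : M) : Prop := Structure.RelMap (L := arith) arithRel.lt ![x, y]

/-- Non-strict order. -/
def leM (x y : M) : Prop := ltM x y ∨ x = y

/-- The numeral `n` in `M`: `0`, or `1 + 1 + ⋯ + 1`. -/
def numeral (M : Type*) [arith.Structure M] : ℕ → M
  | 0 => zeroM M
  | n + 1 => addM (numeral M n) (oneM M)

/-- The standard `arith`-structure on `ℕ`. -/
instance : arith.Structure ℕ where
  funMap {n} f v :=
    match f with
    | .zero => 0
    | .one => 1
    | .add => v 0 + v 1
    | .mul => v 0 * v 1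
  RelMap {n} r v :=
    match r with
    | .lt => v 0 < v 1

/-- `M` is a model of Peano arithmetic: it satisfies the finitely many basic axioms of
`PA` together with induction for all parametrically definable sets (which is equivalent
to the usual first-order induction scheme). -/
def IsPAModel (M : Type*) [arith.Structure M] : Prop :=
  (∀ x : M, addM x (zeroM M) = x) ∧
  (∀ x y : M, addM x (addM y (oneM M)) = addM (addM x y) (oneM M)) ∧
  (∀ x : M, mulM x (zeroM M) = zeroM M) ∧
  (∀ x y : M, mulM x (addM y (oneM M)) = addM (mulM x y) x) ∧
  (∀ x : M, ¬ ltM x (zeroM M)) ∧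
  (∀ x y : M, ltM x (addM y (oneM M)) ↔ (ltM x y ∨ x = y)) ∧
  (∀ x : M, addM x (oneM M) ≠ zeroM M) ∧
  (∀ x y : M, addM x (oneM M) = addM y (oneM M) → x = y) ∧
  (∀ s : Set M, Set.Definable₁ (Set.univ : Set M) arith s →
    zeroM M ∈ s → (∀ x ∈ s, addM x (oneM M) ∈ s) → ∀ x : M, x ∈ s)

/-- An element of `M` is standard if it is a numeral. -/
def IsStd (x : M) : Prop := ∃ n : ℕ, x = numeral M n

/-- `M` is a non-standard model of `PA`: a model of `PA` not isomorphic to the standard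
model `ℕ`. -/
def NonstandardModel (M : Type*) [arith.Structure M] : Prop :=
  IsPAModel M ∧ ¬ Nonempty (M ≃[arith] ℕ)

/-- `(x)_i = 1`: the `i`-th binary digit of `x` is `1`, for standard `i`.  This is expressed
by saying that `x = u·2^(i+1) + (2^i + v)` with `v < 2^i`, where `2^i`, `2^(i+1)` are
numerals. -/
def digitB (x : M) (i : ℕ) : Prop :=
  ∃ u v : M, x = addM (mulM u (numeral M (2 ^ (i + 1)))) (addM (numeral M (2 ^ i)) v) ∧
    ltM v (numeral M (2 ^ i))

/-- The standard system of `M`: the collection of subsets of `ℕ` coded by some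
non-standard element of `M` (via its standard binary digits). -/
def SSy (M : Type*) [arith.Structure M] : Set (Set ℕ) :=
  {X | ∃ a : M, ¬ IsStd a ∧ ∀ i : ℕ, i ∈ X ↔ digitB a i}

/-- A function `M → M` is definable (with parameters) if its graph is a definable set. -/
def DefinableFun₁ (f : M → M) : Prop :=
  Set.Definable (Set.univ : Set M) arith {v : Fin 2 → M | f (v 0) = v 1}

/-- A `k`-ary function `M^k → M` is definable (with parameters) if its graph is a
definable set. -/
def DefinableFun {k : ℕ} (F : (Fin k → M) → M) : Prop :=
  Set.Definable (Set.univ : Set M) arith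
    {v : Fin (k + 1) → M | F (fun i => v i.castSucc) = v (Fin.last k)}

/-- `c` is the internal cardinality of the set `D ⊆ M`: there is an `M`-definable
bijection between `{x : x < c}` and `D`. -/
def InternalCard (D : Set M) (c : M) : Prop :=
  ∃ f : M → M, DefinableFun₁ f ∧ Set.BijOn f {x : M | ltM x c} D

/-- `y = 2^x` in the model `M`, expressed via the existence of a definable function
satisfying the recursion of the base-`2` exponential up to `x`. -/
def IsPow2 (x y : M) : Prop :=
  ∃ f : M → M, DefinableFun₁ f ∧ f (zeroM M) = oneM M ∧
    (∀ z : M, ltM z x → f (addM z (oneM M)) = addM (f z) (f z)) ∧ f x = y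

end Arith

namespace Arith

variable {N : Type*} [arith.Structure N]

/-- Formulas with constants for all elements of `N`, in free variables `x_σ` indexed by
binary sequences `σ ∈ 2^n`. -/
abbrev CFormula (N : Type*) [arith.Structure N] (n : ℕ) : Type _ :=
  (arith[[N]]).Formula (Fin n → Bool)

/-- `d^k` for standard `k`. -/
def powStd (d : N) : ℕ → N
  | 0 => oneM N
  | k + 1 => mulM (powStd d k) d

/-- The binary sequence of length `n` coded by `j < 2^n`. -/
def binOfFin {n : ℕ} (j : Fin (2 ^ n)) : Fin n → Bool := fun i => j.val.testBit i.val

/-- The code `∑_σ b_σ · d^(rank σ)` of a tuple `(b_σ : σ ∈ 2^n)` of elements below `d`,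
in base `d`. -/
def tupleCode (d : N) {n : ℕ} (b : (Fin n → Bool) → N) : N :=
  (List.finRange (2 ^ n)).foldr
    (fun j acc => addM (mulM (b (binOfFin j)) (powStd d j.val)) acc) (zeroM N)

/-- `b` realizes all formulas in `fmls`. -/
def RealizesAll {n : ℕ} (fmls : Set (CFormula N n)) (b : (Fin n → Bool) → N) : Prop :=
  ∀ φ ∈ fmls, φ.Realize b

/-- The set of codes of tuples realizing `fmls` in `N`; this represents the internal set
`p(N)` of realizations of a condition. -/
def realizationCodes (d : N) {n : ℕ} (fmls : Set (CFormula N n)) : Set N :=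
  {e | ∃ b : (Fin n → Bool) → N, RealizesAll fmls b ∧ e = tupleCode d b}

/-- A condition: a finite type `p` of `N` in the variables `(x_σ : σ ∈ 2^{n_p})`
(with parameters from `N`, and no quantifiers over any `x_σ`), such that `p ⊢ x_σ < d`
(where `d = 2^a`), and such that for some positive rational `r = u/v`, internally in `N`,
`|p(N)| > r · d^(2^{n_p})`. -/
structure Condition (N : Type*) [arith.Structure N] (d : N) : Type _ where
  n : ℕ
  fmls : Set (CFormula N n)
  finite : fmls.Finite
  realizable : ∃ b : (Fin n → Bool) → N, RealizesAll fmls b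
  bounded : ∀ b : (Fin n → Bool) → N, RealizesAll fmls b → ∀ σ : Fin n → Bool, ltM (b σ) d
  large : ∃ (u v : ℕ) (c : N), 0 < u ∧ 0 < v ∧
    InternalCard (realizationCodes d fmls) c ∧
    ltM (mulM (numeral N u) (powStd d (2 ^ n))) (mulM (numeral N v) c)

/-- The `m`-reduct of a formula in the variables `(x_σ : σ ∈ 2^n)`: substitute
`x_{σ↾m}` for `x_σ`. -/
def reduct {n m : ℕ} (h : m ≤ n) (φ : CFormula N n) : CFormula N m :=
  φ.relabel fun σ => fun i => σ (Fin.castLE h i)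

/-- The order on conditions: `q ≤ p` iff `n_q ≥ n_p` and `q` contains every
`n_q`-ramification of every formula in `p` (i.e. every formula whose `n_p`-reduct lies
in `p`). -/
def CondLE {d : N} (q p : Condition N d) : Prop :=
  ∃ h : p.n ≤ q.n, ∀ ψ : CFormula N q.n, reduct h ψ ∈ p.fmls → ψ ∈ q.fmls

/-- Formulas in the variables `(x_f : f ∈ 2^ω)` with constants from `N`. -/
abbrev CFormulaInf (N : Type*) [arith.Structure N] : Type _ :=
  (arith[[N]]).Formula (ℕ → Bool)

/-- The `m`-reduct of a formula in the variables `(x_f : f ∈ 2^ω)`: substitute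
`x_{f↾m}` for `x_f`. -/
def reductInf {m : ℕ} (φ : CFormulaInf N) : CFormula N m :=
  φ.relabel fun f => fun i => f i.val

end Arith

/-!
A model of Peano arithmetic can count its own bounded definable sets: by Gödel's `β`-function,
definable primitive recursion is available, so the number `count P n` of `i < n` satisfying a
definable `P` makes sense inside the model, and it is the internal cardinality.

By induction inside the model, finitely many definable sets `S i` satisfy the Bonferroni inequality
`∑ i, |S i ∩ [0, D)| ≤ D + ∑ i ≠ j, |S i ∩ S j ∩ [0, D)|`. Hence among more than `2 v` sets of size
greater than `D / v` two have an intersection of size at least a fixed standard fraction of `D`.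
Taking for `S i` the realizations of conditions on `2 ^ n` variables and `D = d ^ 2 ^ n`, this says
that a large intersection makes the union of two of the conditions a condition again. So an
antichain has at most `2 v` elements with given `n` and `v`, and there are countably many pairs
`(n, v)`.
-/

namespace Arith

/-! ### Definability with parameters -/

/-- A space in which definability with parameters over `N` makes sense: as in a diffeological
space, it is specified by its plots, the maps from powers of `N` declared to be definable. -/
class DefinableSpace (N : Type*) [arith.Structure N] (X : Type*) where
  IsPlot : ∀ {α : Type}, ((α → N) → X) → Prop
  isPlot_const : ∀ {α : Type} (x : X), IsPlot fun _ : α → N => x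
  isPlot_comp : ∀ {α β : Type} {p : (α → N) → X} (g : α → β), IsPlot p →
    IsPlot fun v : β → N => p (v ∘ g)

/-- Definability with parameters of a map between definable spaces. For a predicate it says that
its extension is a definable set, for a map into `N` that its graph is one. -/
@[fun_prop]
def IsDefinable (N : Type*) [arith.Structure N] {X Y : Type*} [DefinableSpace N X]
    [DefinableSpace N Y] (f : X → Y) : Prop :=
  ∀ ⦃α : Type⦄ ⦃p : (α → N) → X⦄, DefinableSpace.IsPlot p → DefinableSpace.IsPlot (f ∘ p)

section Definability

open DefinableSpace

variable {N : Type*} [arith.Structure N] {X Y Z : Type*}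

instance : DefinableSpace N N where
  IsPlot := Set.univ.DefinableFun arith
  isPlot_const x := arith.definableFun_const _ (Set.mem_univ x)
  isPlot_comp g hp := hp.preimage_comp (Option.map g)

instance : DefinableSpace N Prop where
  IsPlot p := Set.univ.Definable arith (Set.ofPred p)
  isPlot_const P := by
    obtain rfl | rfl := Classical.propComplete P
    exacts [Set.definable_univ, Set.definable_empty]
  isPlot_comp g hp := hp.preimage_comp g

instance [DefinableSpace N X] [DefinableSpace N Y] : DefinableSpace N (X × Y) where
  IsPlot p := IsPlot (N := N) (fun v => (p v).1) ∧ IsPlot (N := N) fun v => (p v).2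
  isPlot_const x := ⟨isPlot_const x.1, isPlot_const x.2⟩
  isPlot_comp g hp := ⟨isPlot_comp g hp.1, isPlot_comp g hp.2⟩

variable [DefinableSpace N X] [DefinableSpace N Y] [DefinableSpace N Z]

namespace IsDefinable

@[fun_prop]
theorem id : IsDefinable N fun x : X => x :=
  fun _ _ hp => hp

@[fun_prop]
theorem const (y : Y) : IsDefinable N fun _ : X => y :=
  fun _ _ _ => isPlot_const y

@[fun_prop]
theorem comp {g : Y → Z} {f : X → Y} (hg : IsDefinable N g) (hf : IsDefinable N f) :
    IsDefinable N fun x => g (f x) :=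
  fun _ _ hp => hg (hf hp)

@[fun_prop]
theorem fst {f : X → Y × Z} (hf : IsDefinable N f) : IsDefinable N fun x => (f x).1 :=
  fun _ _ hp => (hf hp).1

@[fun_prop]
theorem snd {f : X → Y × Z} (hf : IsDefinable N f) : IsDefinable N fun x => (f x).2 :=
  fun _ _ hp => (hf hp).2

@[fun_prop]
theorem prodMk {f : X → Y} {g : X → Z} (hf : IsDefinable N f) (hg : IsDefinable N g) :
    IsDefinable N fun x => (f x, g x) :=
  fun _ _ hp => ⟨hf hp, hg hp⟩

@[fun_prop]
theorem and {P Q : X → Prop} (hP : IsDefinable N P) (hQ : IsDefinable N Q) :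
    IsDefinable N fun x => P x ∧ Q x :=
  fun _ _ hp => (hP hp).inter (hQ hp)

@[fun_prop]
theorem or {P Q : X → Prop} (hP : IsDefinable N P) (hQ : IsDefinable N Q) :
    IsDefinable N fun x => P x ∨ Q x :=
  fun _ _ hp => (hP hp).union (hQ hp)

@[fun_prop]
theorem not {P : X → Prop} (hP : IsDefinable N P) : IsDefinable N fun x => ¬ P x :=
  fun _ _ hp => (hP hp).compl

@[fun_prop]
theorem imp {P Q : X → Prop} (hP : IsDefinable N P) (hQ : IsDefinable N Q) :
    IsDefinable N fun x => P x → Q x := by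
  simp only [imp_iff_not_or]
  fun_prop

@[fun_prop]
theorem iff {P Q : X → Prop} (hP : IsDefinable N P) (hQ : IsDefinable N Q) :
    IsDefinable N fun x => P x ↔ Q x := by
  simp only [iff_def]
  fun_prop

@[fun_prop]
theorem eq {f g : X → N} (hf : IsDefinable N f) (hg : IsDefinable N g) :
    IsDefinable N fun x => f x = g x :=
  fun _ _ hp => (hf hp).ofPred_eq (hg hp)

@[fun_prop]
theorem ex {P : X → N → Prop} (hP : IsDefinable N fun x : X × N => P x.1 x.2) :
    IsDefinable N fun x => ∃ y, P x y := by
  intro α p hp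
  have hq : IsPlot fun w : α ⊕ Unit → N => (p (w ∘ Sum.inl), w (Sum.inr ())) :=
    ⟨isPlot_comp Sum.inl hp, Set.DefinableFun.proj arith⟩
  refine cast (congrArg _ ?_) (Set.Definable.exists_of_finite (hP hq))
  ext v
  exact ⟨fun ⟨u, hu⟩ => ⟨u (), hu⟩, fun ⟨y, hy⟩ => ⟨fun _ => y, hy⟩⟩

@[fun_prop]
theorem all {P : X → N → Prop} (hP : IsDefinable N fun x : X × N => P x.1 x.2) :
    IsDefinable N fun x => ∀ y, P x y := by
  simp only [← not_exists_not (p := P _)]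
  fun_prop

theorem funMap {n : ℕ} (φ : arith.Functions n) {f : Fin n → X → N}
    (hf : ∀ i, IsDefinable N (f i)) : IsDefinable N fun x => Structure.funMap φ fun i => f i x := by
  have hφ : (Set.univ : Set N).DefinableFun arith (Structure.funMap φ) := .of_empty (.fun_symbol φ)
  exact fun _ p hp => hφ.comp (g := fun v i => f i (p v)) fun i => hf i hp

theorem of_graph {f : X → N} (hf : IsDefinable N fun p : X × N => f p.1 = p.2) :
    IsDefinable N f := by
  intro α p hp
  have hq : IsPlot fun w : Option α → N => (p (w ∘ some), w none) :=
    ⟨isPlot_comp some hp, Set.DefinableFun.proj arith⟩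
  exact hf hq

@[fun_prop]
theorem ite {P : X → Prop} [∀ x, Decidable (P x)] {f g : X → N} (hP : IsDefinable N P)
    (hf : IsDefinable N f) (hg : IsDefinable N g) :
    IsDefinable N fun x => if P x then f x else g x := by
  refine of_graph ?_
  simp only [ite_eq_iff]
  fun_prop

end IsDefinable

theorem isDefinable_iff_definable₁ {S : Set N} :
    IsDefinable N (fun y => y ∈ S) ↔ Set.univ.Definable₁ arith S := by
  refine ⟨fun hS => hS (p := fun v : Fin 1 → N => v 0) (Set.DefinableFun.proj arith), fun hS => ?_⟩
  exact fun _ p hp => hS.preimage_map (F := fun v _ => p v) fun _ => hp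

theorem definableFun₁_iff_isDefinable {f : N → N} : DefinableFun₁ f ↔ IsDefinable N f := by
  constructor
  · refine fun hf => .of_graph fun _ p hp => ?_
    exact hf.preimage_map (F := fun v => ![(p v).1, (p v).2])
      (Fin.forall_fin_two.2 ⟨hp.1, hp.2⟩)
  · intro hf
    have hproj (i : Fin 2) : IsPlot fun v : Fin 2 → N => v i := Set.DefinableFun.proj arith
    exact (hf (hproj 0)).ofPred_eq (hproj 1)

end Definability

/-! ### Models of Peano arithmetic as ordered semirings -/

section OrderedSemiring

variable {N : Type*} [arith.Structure N]

instance [Fact (IsPAModel N)] : Zero N := ⟨zeroM N⟩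

instance [Fact (IsPAModel N)] : One N := ⟨oneM N⟩

instance [Fact (IsPAModel N)] : Add N := ⟨addM⟩

instance [Fact (IsPAModel N)] : Mul N := ⟨mulM⟩

instance [Fact (IsPAModel N)] : LT N := ⟨ltM⟩

instance [Fact (IsPAModel N)] : LE N := ⟨leM⟩

variable [Fact (IsPAModel N)]

namespace IsDefinable

variable {X : Type*} [DefinableSpace N X] {f g : X → N}

@[fun_prop]
theorem add (hf : IsDefinable N f) (hg : IsDefinable N g) : IsDefinable N fun x => f x + g x := by
  have h := funMap arithFunc.add (f := ![f, g]) (by simp [Fin.forall_fin_two, hf, hg])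
  convert h with x
  exact congrArg (Structure.funMap _) (funext (Fin.forall_fin_two.2 ⟨rfl, rfl⟩))

@[fun_prop]
theorem mul (hf : IsDefinable N f) (hg : IsDefinable N g) : IsDefinable N fun x => f x * g x := by
  have h := funMap arithFunc.mul (f := ![f, g]) (by simp [Fin.forall_fin_two, hf, hg])
  convert h with x
  exact congrArg (Structure.funMap _) (funext (Fin.forall_fin_two.2 ⟨rfl, rfl⟩))

@[fun_prop]
theorem lt (hf : IsDefinable N f) (hg : IsDefinable N g) : IsDefinable N fun x => f x < g x := by
  have h : (∅ : Set N).Definable arith {z : Fin 2 → N | z 0 < z 1} :=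
    Set.empty_definable_iff.2 ⟨Relations.formula₂ (L := arith) .lt (.var 0) (.var 1),
      Set.ext fun z => (Formula.realize_rel₂ (L := arith) (R := .lt) (t₁ := .var 0) (t₂ := .var 1)
        (v := z)).symm⟩
  exact fun _ _ hp => (h.mono (Set.empty_subset _)).preimage_map
    (F := fun v => ![f _, g _]) (Fin.forall_fin_two.2 ⟨hf hp, hg hp⟩)

@[fun_prop]
theorem le (hf : IsDefinable N f) (hg : IsDefinable N g) : IsDefinable N fun x => f x ≤ g x :=
  (hf.lt hg).or (hf.eq hg)

end IsDefinable

@[elab_as_elim]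
protected theorem induction {P : N → Prop} (definable : IsDefinable N P) (zero : P 0)
    (succ : ∀ x, P x → P (x + 1)) (x : N) : P x :=
  (Fact.out : IsPAModel N).2.2.2.2.2.2.2.2 {x | P x} (isDefinable_iff_definable₁.1 definable)
    zero succ x

protected theorem add_zero (x : N) : x + 0 = x := (Fact.out : IsPAModel N).1 x

protected theorem add_succ (x y : N) : x + (y + 1) = x + y + 1 := (Fact.out : IsPAModel N).2.1 x y

protected theorem mul_zero (x : N) : x * 0 = 0 := (Fact.out : IsPAModel N).2.2.1 x

protected theorem mul_succ (x y : N) : x * (y + 1) = x * y + x :=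
  (Fact.out : IsPAModel N).2.2.2.1 x y

protected theorem not_lt_zero (x : N) : ¬ x < 0 := (Fact.out : IsPAModel N).2.2.2.2.1 x

protected theorem lt_succ_iff (x y : N) : x < y + 1 ↔ x ≤ y :=
  (Fact.out : IsPAModel N).2.2.2.2.2.1 x y

protected theorem succ_ne_zero (x : N) : x + 1 ≠ 0 := (Fact.out : IsPAModel N).2.2.2.2.2.2.1 x

protected theorem succ_inj {x y : N} (h : x + 1 = y + 1) : x = y :=
  (Fact.out : IsPAModel N).2.2.2.2.2.2.2.1 x y h

protected theorem zero_add (x : N) : 0 + x = x := by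
  induction x using Arith.induction with
  | definable => fun_prop
  | zero => exact Arith.add_zero 0
  | succ x ih => rw [Arith.add_succ, ih]

protected theorem succ_add (x y : N) : x + 1 + y = x + y + 1 := by
  induction y using Arith.induction with
  | definable => fun_prop
  | zero => simp only [Arith.add_zero]
  | succ y ih => rw [Arith.add_succ, ih, Arith.add_succ]

protected theorem add_comm (x y : N) : x + y = y + x := by
  induction y using Arith.induction with
  | definable => fun_prop
  | zero => rw [Arith.add_zero, Arith.zero_add]
  | succ y ih => rw [Arith.add_succ, ih, Arith.succ_add]

protected theorem add_assoc (x y z : N) : x + y + z = x + (y + z) := by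
  induction z using Arith.induction with
  | definable => fun_prop
  | zero => simp only [Arith.add_zero]
  | succ z ih => simp only [Arith.add_succ, ih]

protected theorem zero_mul (x : N) : 0 * x = 0 := by
  induction x using Arith.induction with
  | definable => fun_prop
  | zero => exact Arith.mul_zero 0
  | succ x ih => rw [Arith.mul_succ, ih, Arith.add_zero]

protected theorem succ_mul (x y : N) : (x + 1) * y = x * y + y := by
  induction y using Arith.induction with
  | definable => fun_prop
  | zero => simp only [Arith.mul_zero, Arith.add_zero]
  | succ y ih =>
    rw [Arith.mul_succ, ih, Arith.mul_succ, Arith.add_assoc, Arith.add_assoc, Arith.add_succ y x,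
      Arith.add_succ x y, Arith.add_comm y x]

protected theorem mul_comm (x y : N) : x * y = y * x := by
  induction y using Arith.induction with
  | definable => fun_prop
  | zero => rw [Arith.mul_zero, Arith.zero_mul]
  | succ y ih => rw [Arith.mul_succ, ih, Arith.succ_mul]

protected theorem mul_add (x y z : N) : x * (y + z) = x * y + x * z := by
  induction z using Arith.induction with
  | definable => fun_prop
  | zero => simp only [Arith.add_zero, Arith.mul_zero]
  | succ z ih => rw [Arith.add_succ, Arith.mul_succ, ih, Arith.mul_succ, Arith.add_assoc]

protected theorem mul_assoc (x y z : N) : x * y * z = x * (y * z) := by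
  induction z using Arith.induction with
  | definable => fun_prop
  | zero => simp only [Arith.mul_zero]
  | succ z ih => rw [Arith.mul_succ, ih, Arith.mul_succ, Arith.mul_add]

protected theorem mul_one (x : N) : x * 1 = x := by
  rw [← Arith.zero_add 1, Arith.mul_succ, Arith.mul_zero, Arith.zero_add]

-- `numeral` and `powStd` become the casts and powers of this semiring.
instance : CommSemiring N where
  add_assoc := Arith.add_assoc
  zero_add := Arith.zero_add
  add_zero := Arith.add_zero
  add_comm := Arith.add_comm
  nsmul n x := numeral N n * x
  nsmul_zero := Arith.zero_mul
  nsmul_succ n x := Arith.succ_mul (numeral N n) x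
  left_distrib := Arith.mul_add
  right_distrib x y z := by
    rw [Arith.mul_comm, Arith.mul_add, Arith.mul_comm z x, Arith.mul_comm z y]
  zero_mul := Arith.zero_mul
  mul_zero := Arith.mul_zero
  mul_assoc := Arith.mul_assoc
  one_mul x := (Arith.mul_comm 1 x).trans (Arith.mul_one x)
  mul_one := Arith.mul_one
  mul_comm := Arith.mul_comm
  natCast := numeral N
  natCast_zero := rfl
  natCast_succ _ := rfl
  npow n x := powStd x n
  npow_zero _ := rfl
  npow_succ _ _ := rfl

@[fun_prop]
theorem IsDefinable.dvd {X : Type*} [DefinableSpace N X] {f g : X → N} (hf : IsDefinable N f)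
    (hg : IsDefinable N g) : IsDefinable N fun x => f x ∣ g x := by
  have h : IsDefinable N fun x => ∃ y, g x = f x * y := by fun_prop
  exact h

@[fun_prop]
theorem IsDefinable.sum {X ι : Type*} [DefinableSpace N X] (s : Finset ι) {f : ι → X → N}
    (hf : ∀ i, IsDefinable N (f i)) : IsDefinable N fun x => ∑ i ∈ s, f i x := by
  classical
  induction s using Finset.induction_on with
  | empty => exact .const 0
  | insert i s hi ih =>
    simp only [Finset.sum_insert hi]
    fun_prop

theorem eq_zero_or_exists_eq_succ (x : N) : x = 0 ∨ ∃ y, x = y + 1 := by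
  induction x using Arith.induction with
  | definable => fun_prop
  | zero => exact Or.inl rfl
  | succ x _ => exact Or.inr ⟨x, rfl⟩

protected theorem add_right_cancel {x y z : N} (h : x + z = y + z) : x = y := by
  induction z using Arith.induction with
  | definable => fun_prop
  | zero => rwa [add_zero, add_zero] at h
  | succ z ih => exact ih (Arith.succ_inj (by rwa [add_assoc, add_assoc]))

protected theorem lt_iff_exists_eq_add_succ {x y : N} : x < y ↔ ∃ z, y = x + z + 1 := by
  induction y using Arith.induction with
  | definable => fun_prop
  | zero => exact iff_of_false (Arith.not_lt_zero x) fun ⟨_, h⟩ => Arith.succ_ne_zero _ h.symm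
  | succ y ih =>
    rw [Arith.lt_succ_iff, show x ≤ y ↔ x < y ∨ x = y from Iff.rfl, ih]
    constructor
    · rintro (⟨z, rfl⟩ | rfl)
      · exact ⟨z + 1, by rw [add_assoc x]⟩
      · exact ⟨0, by rw [add_zero]⟩
    · rintro ⟨z, hz⟩
      obtain rfl := Arith.succ_inj hz
      rcases eq_zero_or_exists_eq_succ z with rfl | ⟨w, rfl⟩
      · exact Or.inr (add_zero x).symm
      · exact Or.inl ⟨w, (add_assoc x w 1).symm⟩

protected theorem le_iff_exists_eq_add {x y : N} : x ≤ y ↔ ∃ z, y = x + z := by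
  rw [← Arith.lt_succ_iff, Arith.lt_iff_exists_eq_add_succ]
  exact exists_congr fun z => ⟨Arith.succ_inj, congrArg (· + 1)⟩

protected theorem le_total (x y : N) : x ≤ y ∨ y ≤ x := by
  induction y using Arith.induction with
  | definable => fun_prop
  | zero => exact Or.inr (Arith.le_iff_exists_eq_add.2 ⟨x, (zero_add x).symm⟩)
  | succ y ih =>
    rcases ih with h | h
    · exact Or.inl (Or.inl ((Arith.lt_succ_iff x y).2 h))
    · obtain ⟨z, rfl⟩ := Arith.le_iff_exists_eq_add.1 h
      rcases eq_zero_or_exists_eq_succ z with rfl | ⟨w, rfl⟩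
      · rw [add_zero]
        exact Or.inl (Or.inl ((Arith.lt_succ_iff y y).2 (Or.inr rfl)))
      · exact Or.inr (Arith.le_iff_exists_eq_add.2 ⟨w, by rw [add_right_comm, add_assoc]⟩)

protected theorem eq_zero_of_add_eq_zero {x y : N} (h : x + y = 0) : y = 0 := by
  rcases eq_zero_or_exists_eq_succ y with rfl | ⟨w, rfl⟩
  · rfl
  · exact absurd ((add_assoc x w 1).trans h) (Arith.succ_ne_zero _)

protected theorem le_antisymm {x y : N} (hxy : x ≤ y) (hyx : y ≤ x) : x = y := by
  obtain ⟨z, rfl⟩ := Arith.le_iff_exists_eq_add.1 hxy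
  obtain ⟨w, hw⟩ := Arith.le_iff_exists_eq_add.1 hyx
  have h : w + z = 0 := Arith.add_right_cancel (z := x) (by
    rw [zero_add, add_comm w, add_right_comm, add_comm z, ← hw])
  rw [Arith.eq_zero_of_add_eq_zero h, add_zero]

protected theorem lt_irrefl (x : N) : ¬ x < x := by
  rw [Arith.lt_iff_exists_eq_add_succ]
  rintro ⟨z, hz⟩
  refine Arith.succ_ne_zero z (Arith.add_right_cancel (z := x) ?_)
  rw [zero_add, add_comm, ← add_assoc, ← hz]

open Classical in
noncomputable instance : LinearOrder N where
  le_refl _ := Or.inr rfl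
  le_trans x y z hxy hyz := by
    obtain ⟨u, rfl⟩ := Arith.le_iff_exists_eq_add.1 hxy
    obtain ⟨w, rfl⟩ := Arith.le_iff_exists_eq_add.1 hyz
    exact Arith.le_iff_exists_eq_add.2 ⟨u + w, add_assoc x u w⟩
  le_antisymm _ _ := Arith.le_antisymm
  lt_iff_le_not_ge x y := by
    refine ⟨fun h => ⟨Or.inl h, fun h' => Arith.lt_irrefl x ?_⟩, ?_⟩
    · rwa [← Arith.le_antisymm (Or.inl h) h'] at h
    · rintro ⟨h | rfl, h'⟩
      · exact h
      · exact absurd (Or.inr rfl) h'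
  le_total := Arith.le_total
  toDecidableLE := Classical.decRel _

instance : IsOrderedCancelAddMonoid N where
  add_le_add_left x y h z := by
    obtain ⟨w, rfl⟩ := Arith.le_iff_exists_eq_add.1 h
    exact Arith.le_iff_exists_eq_add.2 ⟨w, add_right_comm x w z⟩
  le_of_add_le_add_left x y z h := by
    obtain ⟨w, hw⟩ := Arith.le_iff_exists_eq_add.1 h
    exact Arith.le_iff_exists_eq_add.2
      ⟨w, Arith.add_right_cancel (z := x) (by rw [add_comm, hw]; ring)⟩

instance : CanonicallyOrderedAdd N where
  exists_add_of_le h := Arith.le_iff_exists_eq_add.1 h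
  le_self_add _ y := Arith.le_iff_exists_eq_add.2 ⟨y, rfl⟩
  le_add_self _ y := Arith.le_iff_exists_eq_add.2 ⟨y, add_comm _ _⟩

instance : SuccAddOrder N where
  succ x := x + 1
  le_succ _ := le_self_add
  max_of_succ_le {x} h := absurd ((Arith.lt_succ_iff x x).2 le_rfl) h.not_gt
  succ_le_of_lt {x y} h := by
    obtain ⟨z, rfl⟩ := Arith.lt_iff_exists_eq_add_succ.1 h
    exact Arith.le_iff_exists_eq_add.2 ⟨z, add_right_comm x z 1⟩
  succ_eq_add_one _ := rfl

instance : Nontrivial N := ⟨1, 0, zero_add (1 : N) ▸ Arith.succ_ne_zero 0⟩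

instance : NoZeroDivisors N where
  eq_zero_or_eq_zero_of_mul_eq_zero {x y} h := by
    rcases eq_zero_or_exists_eq_succ y with rfl | ⟨w, rfl⟩
    · exact Or.inr rfl
    · exact Or.inl (Arith.eq_zero_of_add_eq_zero ((Arith.mul_succ x w).symm.trans h))

theorem mul_lt_mul_left_of_pos {x y z : N} (hx : 0 < x) (h : y < z) : x * y < x * z := by
  obtain ⟨w, rfl⟩ := exists_add_of_le h.le
  rw [mul_add, lt_add_iff_pos_right, pos_iff_ne_zero]
  exact mul_ne_zero hx.ne' fun h0 => by simp [h0] at h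

instance : IsStrictOrderedRing N where
  zero_le_one := zero_le
  mul_lt_mul_of_pos_left _ hx _ _ h := mul_lt_mul_left_of_pos hx h
  mul_lt_mul_of_pos_right x hx y z h := by
    rw [mul_comm y, mul_comm z]
    exact mul_lt_mul_left_of_pos hx h

end OrderedSemiring

/-! ### Coding of finite sequences and definable recursion -/

section Recursion

variable {N : Type*} [arith.Structure N] [Fact (IsPAModel N)]

theorem exists_least {P : N → Prop} (hP : IsDefinable N P) (h : ∃ x, P x) :
    ∃ x, P x ∧ ∀ y < x, ¬ P y := by
  by_contra! hmin
  have key (x : N) : ∀ y < x, ¬ P y := by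
    induction x using Arith.induction with
    | definable => fun_prop
    | zero => exact fun y hy => absurd hy not_lt_zero
    | succ x ih =>
      intro y hy hPy
      obtain ⟨z, hz, hPz⟩ := hmin y hPy
      exact ih z (hz.trans_le (Order.lt_add_one_iff.1 hy)) hPz
  obtain ⟨x, hx⟩ := h
  exact key (x + 1) x (lt_add_one x) hx

/-- The least element satisfying `P`, and `0` if there is none; over a nonstandard model there need
not be one unless `P` is definable. -/
noncomputable def least (P : N → Prop) : N :=
  open Classical in if h : ∃ x, P x ∧ ∀ y < x, ¬ P y then h.choose else 0

theorem least_eq {P : N → Prop} {x : N} (hx : P x) (hmin : ∀ y < x, ¬ P y) : least P = x := by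
  have h : ∃ x, P x ∧ ∀ y < x, ¬ P y := ⟨x, hx, hmin⟩
  rw [least, dif_pos h]
  exact le_antisymm (not_lt.1 fun hlt => h.choose_spec.2 x hlt hx)
    (not_lt.1 fun hlt => hmin _ hlt h.choose_spec.1)

theorem least_eq_iff {P : N → Prop} {x : N} : least P = x ↔
    (P x ∧ ∀ y < x, ¬ P y) ∨ ((¬ ∃ y, P y ∧ ∀ z < y, ¬ P z) ∧ x = 0) := by
  constructor
  · rintro rfl
    by_cases h : ∃ x, P x ∧ ∀ y < x, ¬ P y
    · rw [least, dif_pos h]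
      exact Or.inl h.choose_spec
    · exact Or.inr ⟨h, dif_neg h⟩
  · rintro (⟨hx, hmin⟩ | ⟨h, rfl⟩)
    · exact least_eq hx hmin
    · exact dif_neg h

@[fun_prop]
theorem IsDefinable.least {X : Type*} [DefinableSpace N X] {P : X → N → Prop}
    (hP : IsDefinable N fun p : X × N => P p.1 p.2) : IsDefinable N fun x => least (P x) := by
  refine .of_graph ?_
  simp only [least_eq_iff]
  fun_prop

theorem exists_common_multiple {f : N → N} (hf : IsDefinable N f) (h0 : ∀ i, f i ≠ 0) (n : N) :
    ∃ b, b ≠ 0 ∧ ∀ i < n, f i ∣ b := by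
  induction n using Arith.induction with
  | definable => fun_prop
  | zero => exact ⟨1, one_ne_zero, fun i hi => absurd hi not_lt_zero⟩
  | succ n ih =>
    obtain ⟨b, hb, h⟩ := ih
    refine ⟨b * f n, mul_ne_zero hb (h0 n), fun i hi => ?_⟩
    rcases (Order.lt_add_one_iff.1 hi).lt_or_eq with hi | rfl
    · exact (h i hi).mul_right _
    · exact dvd_mul_left _ _

theorem dvd_of_dvd_add {m x y : N} (h : m ∣ x + y) (hx : m ∣ x) : m ∣ y := by
  obtain ⟨k, hk⟩ := h
  obtain ⟨l, rfl⟩ := hx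
  rcases le_total l k with h | h
  · obtain ⟨t, rfl⟩ := exists_add_of_le h
    rw [mul_add, add_right_inj] at hk
    exact ⟨t, hk⟩
  · have hle : m * l + y ≤ m * l := hk.trans_le (by gcongr)
    rw [add_le_iff_nonpos_right, nonpos_iff_eq_zero] at hle
    exact hle ▸ dvd_zero m

/-- The `i`-th modulus `1 + (i + 1) b` of Gödel's `β`-function. -/
def modulus (b i : N) : N := 1 + (i + 1) * b

@[fun_prop]
theorem IsDefinable.modulus {X : Type*} [DefinableSpace N X] {b i : X → N}
    (hb : IsDefinable N b) (hi : IsDefinable N i) : IsDefinable N fun x => modulus (b x) (i x) := by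
  unfold Arith.modulus
  fun_prop

-- Bézout's identity is not available, so coprimality is stated as Euclid's lemma.
theorem dvd_of_modulus_dvd_modulus_mul {b n i j z : N} (hb : ∀ k < n, k + 1 ∣ b) (hi : i < n)
    (hj : j < n) (hij : i ≠ j) (h : modulus b i ∣ modulus b j * z) : modulus b i ∣ z := by
  unfold modulus at *
  have hsub : ∃ k < n, 1 + (i + 1) * b ∣ (k + 1) * z := by
    rcases hij.lt_or_gt with hlt | hlt <;>
      obtain ⟨k, rfl⟩ := Arith.lt_iff_exists_eq_add_succ.1 hlt
    · refine ⟨k, (le_add_self.trans le_self_add).trans_lt hj, ?_⟩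
      refine dvd_of_dvd_add (x := (i + 1) * ((1 + (i + k + 1 + 1) * b) * z)) ?_ (h.mul_left _)
      exact ⟨(i + k + 1 + 1) * z, by ring⟩
    · refine ⟨k, (le_add_self.trans le_self_add).trans_lt hi, ?_⟩
      refine dvd_of_dvd_add (x := (1 + (j + k + 1 + 1) * b) * ((j + 1) * z)) ?_ (dvd_mul_right _ _)
      convert h.mul_left (j + k + 1 + 1) using 1
      ring
  obtain ⟨k, hk, hkz⟩ := hsub
  obtain ⟨l, hl⟩ := hb k hk
  have hbz : 1 + (i + 1) * b ∣ b * z := by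
    have hkzl := hkz.mul_right l
    rwa [mul_right_comm, ← hl] at hkzl
  refine dvd_of_dvd_add (x := (i + 1) * (b * z)) ?_ (hbz.mul_left _)
  exact ⟨z, by ring⟩

theorem exists_forall_modulus_dvd_iff {P : N → Prop} (hP : IsDefinable N P) (n : N) :
    ∃ a b, ∀ i < n, modulus b i ∣ a ↔ P i := by
  obtain ⟨b, hb0, hb⟩ := exists_common_multiple (f := fun k : N => k + 1) (by fun_prop)
    Arith.succ_ne_zero n
  obtain ⟨c, hc0, hc⟩ := exists_common_multiple (f := modulus b) (by fun_prop) (by simp [modulus]) n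
  obtain ⟨a, ⟨ha0, ha⟩, hmin⟩ := exists_least
    (P := fun a => a ≠ 0 ∧ ∀ i < n, P i → modulus b i ∣ a) (by fun_prop)
    ⟨c, hc0, fun i hi _ => hc i hi⟩
  refine ⟨a, b, fun i hi => ⟨fun h => ?_, ha i hi⟩⟩
  by_contra hPi
  obtain ⟨a', rfl⟩ := h
  have ha'0 : 0 < a' := pos_iff_ne_zero.2 (right_ne_zero_of_mul ha0)
  refine hmin a' ?_ ⟨ha'0.ne', fun j hj hPj => ?_⟩
  · have hm : 1 < modulus b i := by
      have hpos : 0 < (i + 1) * b := pos_iff_ne_zero.2 (mul_ne_zero (Arith.succ_ne_zero i) hb0)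
      exact lt_add_of_pos_right 1 hpos
    exact lt_mul_of_one_lt_left ha'0 hm
  · refine dvd_of_modulus_dvd_modulus_mul hb hj hi ?_ (ha j hj hPj)
    rintro rfl
    exact hPi hPj

/-- Gödel's `β`-function: the code `c = (a, b, B)` represents the sequence whose `i`-th term is the
least `y` such that the modulus with index `i B + y` divides `a`. -/
noncomputable def beta (c : N × N × N) (i : N) : N :=
  least fun y => modulus c.2.1 (i * c.2.2 + y) ∣ c.1

@[fun_prop]
theorem IsDefinable.beta {X : Type*} [DefinableSpace N X] {c : X → N × N × N} {i : X → N}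
    (hc : IsDefinable N c) (hi : IsDefinable N i) : IsDefinable N fun x => beta (c x) (i x) := by
  unfold Arith.beta
  fun_prop

theorem exists_bound {f : N → N} (hf : IsDefinable N f) (n : N) : ∃ B, ∀ i < n, f i < B := by
  induction n using Arith.induction with
  | definable => fun_prop
  | zero => exact ⟨0, fun i hi => absurd hi not_lt_zero⟩
  | succ n ih =>
    obtain ⟨B, hB⟩ := ih
    refine ⟨max B (f n + 1), fun i hi => ?_⟩
    rcases (Order.lt_add_one_iff.1 hi).lt_or_eq with hi | rfl
    · exact lt_max_of_lt_left (hB i hi)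
    · exact lt_max_of_lt_right (lt_add_one _)

theorem mul_add_lt_mul {B i n y : N} (hi : i < n) (hy : y < B) : i * B + y < n * B :=
  calc i * B + y < i * B + B := by gcongr
    _ = (i + 1) * B := by ring
    _ ≤ n * B := by gcongr; exact Order.add_one_le_iff.2 hi

theorem mul_add_inj {B i j y z : N} (hy : y < B) (hz : z < B)
    (h : i * B + y = j * B + z) : i = j ∧ y = z := by
  obtain rfl : i = j := by
    rcases lt_trichotomy i j with hij | hij | hij
    · exact absurd h ((mul_add_lt_mul hij hy).trans_le le_self_add).ne
    · exact hij
    · exact absurd h ((mul_add_lt_mul hij hz).trans_le le_self_add).ne'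
  exact ⟨rfl, add_left_cancel h⟩

theorem exists_forall_beta_eq {f : N → N} (hf : IsDefinable N f) (n : N) :
    ∃ c, ∀ i < n, beta c i = f i := by
  obtain ⟨B, hB⟩ := exists_bound hf n
  obtain ⟨a, b, hab⟩ := exists_forall_modulus_dvd_iff
    (P := fun k => ∃ i, k = i * B + f i ∧ f i < B) (by fun_prop) (n * B)
  refine ⟨(a, b, B), fun i hi => least_eq ?_ fun y hy h => ?_⟩
  · exact (hab _ (mul_add_lt_mul hi (hB i hi))).2 ⟨i, rfl, hB i hi⟩
  · have hyB := hy.trans (hB i hi)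
    obtain ⟨j, hj, hjB⟩ := (hab _ (mul_add_lt_mul hi hyB)).1 h
    obtain ⟨rfl, rfl⟩ := mul_add_inj hyB hjB hj
    exact lt_irrefl _ hy

/-- The sequence coded by `c` obeys the recursion with initial value `z` and step `G` up to `n`. -/
def IsTrace (z : N) (G : N → N → N) (n : N) (c : N × N × N) : Prop :=
  beta c 0 = z ∧ ∀ i < n, beta c (i + 1) = G i (beta c i)

theorem exists_isTrace {G : N → N → N} (hG : IsDefinable N fun p : N × N => G p.1 p.2) (z n : N) :
    ∃ a b B, IsTrace z G n (a, b, B) := by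
  induction n using Arith.induction with
  | definable =>
    unfold IsTrace
    fun_prop
  | zero =>
    obtain ⟨⟨a, b, B⟩, h⟩ := exists_forall_beta_eq (f := fun _ => z) (by fun_prop) 1
    exact ⟨a, b, B, h 0 one_pos, fun i hi => absurd hi not_lt_zero⟩
  | succ n ih =>
    obtain ⟨a, b, B, h0, hstep⟩ := ih
    obtain ⟨⟨a', b', B'⟩, h'⟩ := exists_forall_beta_eq (n := n + 1 + 1)
      (f := fun i => if i ≤ n then beta (a, b, B) i else G n (beta (a, b, B) n)) (by fun_prop)
    have hold {i : N} (hi : i ≤ n) : beta (a', b', B') i = beta (a, b, B) i :=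
      (h' i (Order.lt_add_one_iff.2 (hi.trans le_self_add))).trans (if_pos hi)
    refine ⟨a', b', B', (hold zero_le).trans h0, fun i hi => ?_⟩
    rcases (Order.lt_add_one_iff.1 hi).lt_or_eq with hi | rfl
    · rw [hold (Order.add_one_le_iff.2 hi), hold hi.le, hstep i hi]
    · rw [hold le_rfl, h' _ (lt_add_one _), if_neg (lt_add_one i).not_ge]

theorem IsTrace.mono {z m n : N} {G : N → N → N} {c : N × N × N} (h : IsTrace z G n c)
    (hmn : m ≤ n) : IsTrace z G m c :=
  ⟨h.1, fun i hi => h.2 i (hi.trans_le hmn)⟩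

theorem IsTrace.beta_eq {z n : N} {G : N → N → N} {c c' : N × N × N} (h : IsTrace z G n c)
    (h' : IsTrace z G n c') {i : N} (hi : i ≤ n) : beta c i = beta c' i := by
  induction i using Arith.induction with
  | definable => fun_prop
  | zero => rw [h.1, h'.1]
  | succ i ih =>
    have hin := Order.add_one_le_iff.1 hi
    rw [h.2 i hin, h'.2 i hin, ih hin.le]

/-- The function defined inside `N` by primitive recursion with initial value `z` and step `G`. -/
noncomputable def primRec (z : N) (G : N → N → N) (n : N) : N :=
  least fun y => ∃ a b B, IsTrace z G n (a, b, B) ∧ beta (a, b, B) n = y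

@[fun_prop]
theorem IsDefinable.primRec {X : Type*} [DefinableSpace N X] {z n : X → N} {G : X → N → N → N}
    (hz : IsDefinable N z) (hG : IsDefinable N fun p : (X × N) × N => G p.1.1 p.1.2 p.2)
    (hn : IsDefinable N n) : IsDefinable N fun x => primRec (z x) (G x) (n x) := by
  have hGc {Y : Type _} [DefinableSpace N Y] {x : Y → X} {i s : Y → N} (hx : IsDefinable N x)
      (hi : IsDefinable N i) (hs : IsDefinable N s) : IsDefinable N fun y => G (x y) (i y) (s y) :=
    hG.comp ((hx.prodMk hi).prodMk hs)
  unfold Arith.primRec IsTrace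
  fun_prop

theorem IsTrace.primRec_eq {z n : N} {G : N → N → N} {c : N × N × N} (h : IsTrace z G n c) :
    primRec z G n = beta c n := by
  refine least_eq ⟨_, _, _, h, rfl⟩ ?_
  rintro y hy ⟨a, b, B, h', rfl⟩
  exact hy.ne (h'.beta_eq h le_rfl)

theorem primRec_zero {z : N} {G : N → N → N} (hG : IsDefinable N fun p : N × N => G p.1 p.2) :
    primRec z G 0 = z := by
  obtain ⟨a, b, B, h⟩ := exists_isTrace hG z 0
  exact h.primRec_eq.trans h.1

theorem primRec_succ {z : N} {G : N → N → N} (hG : IsDefinable N fun p : N × N => G p.1 p.2)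
    (n : N) : primRec z G (n + 1) = G n (primRec z G n) := by
  obtain ⟨a, b, B, h⟩ := exists_isTrace hG z (n + 1)
  rw [h.primRec_eq, h.2 n (lt_add_one n), (h.mono le_self_add).primRec_eq]

end Recursion

/-! ### Internal cardinality -/

section Counting

variable {N : Type*} [arith.Structure N] [Fact (IsPAModel N)]

/-- The number, computed inside `N`, of elements below `n` satisfying `P`. -/
noncomputable def count (P : N → Prop) (n : N) : N :=
  open Classical in primRec 0 (fun i s => s + if P i then 1 else 0) n

@[fun_prop]
theorem IsDefinable.count {X : Type*} [DefinableSpace N X] {P : X → N → Prop} {n : X → N}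
    (hP : IsDefinable N fun p : X × N => P p.1 p.2) (hn : IsDefinable N n) :
    IsDefinable N fun x => count (P x) (n x) := by
  unfold Arith.count
  fun_prop

theorem count_zero {P : N → Prop} (hP : IsDefinable N P) : count P 0 = 0 :=
  primRec_zero (by fun_prop)

theorem count_succ {P : N → Prop} [DecidablePred P] (hP : IsDefinable N P) (n : N) :
    count P (n + 1) = count P n + if P n then 1 else 0 := by
  rw [count, primRec_succ (by fun_prop)]
  congr

theorem count_congr {P Q : N → Prop} (hP : IsDefinable N P) (hQ : IsDefinable N Q) {n : N}
    (h : ∀ i < n, P i ↔ Q i) : count P n = count Q n := by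
  classical
  induction n using Arith.induction with
  | definable => fun_prop
  | zero => rw [count_zero hP, count_zero hQ]
  | succ n ih =>
    rw [count_succ hP, count_succ hQ, ih fun i hi => h i (hi.trans (lt_add_one n)),
      if_congr (h n (lt_add_one n)) rfl rfl]

theorem count_false (n : N) : count (fun _ => False) n = 0 := by
  induction n using Arith.induction with
  | definable => fun_prop
  | zero => exact count_zero (by fun_prop)
  | succ n ih => rw [count_succ (by fun_prop), ih, if_neg not_false, add_zero]

theorem count_or_eq {P : N → Prop} (hP : IsDefinable N P) {x n : N} (hx : ¬ P x) (hxn : x < n) :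
    count (fun i => P i ∨ i = x) n = count P n + 1 := by
  classical
  induction n using Arith.induction with
  | definable => fun_prop
  | zero => exact absurd hxn not_lt_zero
  | succ n ih =>
    rw [count_succ (by fun_prop), count_succ hP]
    rcases (Order.lt_add_one_iff.1 hxn).lt_or_eq with hlt | rfl
    · rw [ih hlt, add_right_comm, if_congr (or_iff_left hlt.ne') rfl rfl]
    · have hcongr : count (fun i => P i ∨ i = x) x = count P x :=
        count_congr (by fun_prop) hP fun i hi => or_iff_left hi.ne
      rw [hcongr, if_pos (Or.inr rfl), if_neg hx, add_zero]

theorem count_image {f : N → N} (hf : IsDefinable N f) {c n : N}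
    (hinj : Set.InjOn f {i | i < c}) (hlt : ∀ i < c, f i < n) :
    count (fun y => ∃ i < c, f i = y) n = c := by
  have key (b : N) : b ≤ c → count (fun y => ∃ i < b, f i = y) n = b := by
    induction b using Arith.induction with
    | definable => fun_prop
    | zero => simp [count_false]
    | succ b ih =>
      intro hb
      have hbc := Order.add_one_le_iff.1 hb
      have hnew : ¬ ∃ i < b, f i = f b := fun ⟨i, hi, h⟩ =>
        hi.ne (hinj (hi.trans hbc) hbc h)
      have hsucc (y : N) : (∃ i < b + 1, f i = y) ↔ (∃ i < b, f i = y) ∨ y = f b := by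
        simp only [Order.lt_add_one_iff, le_iff_lt_or_eq, or_and_right, exists_or, exists_eq_left,
          eq_comm (a := y)]
      calc count (fun y => ∃ i < b + 1, f i = y) n
          = count (fun y => (∃ i < b, f i = y) ∨ y = f b) n := by simp only [hsucc]
        _ = count (fun y => ∃ i < b, f i = y) n + 1 :=
          count_or_eq (by fun_prop) hnew (hlt b hbc)
        _ = b + 1 := by rw [ih hbc.le]
  exact key c le_rfl

theorem count_mono {P : N → Prop} (hP : IsDefinable N P) : Monotone (count P) := by
  classical
  intro m n hmn
  induction n using Arith.induction with
  | definable => fun_prop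
  | zero => rw [le_zero_iff.1 hmn]
  | succ n ih =>
    rcases hmn.lt_or_eq with hlt | rfl
    · rw [count_succ hP]
      exact (ih (Order.lt_add_one_iff.1 hlt)).trans le_self_add
    · rfl

theorem count_lt_count {P : N → Prop} (hP : IsDefinable N P) {m n : N} (hm : P m) (hmn : m < n) :
    count P m < count P n := by
  classical
  calc count P m < count P m + 1 := lt_add_one _
    _ = count P (m + 1) := by rw [count_succ hP, if_pos hm]
    _ ≤ count P n := count_mono hP (Order.add_one_le_iff.2 hmn)

theorem exists_count_eq {P : N → Prop} (hP : IsDefinable N P) {i n : N} (hi : i < count P n) :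
    ∃ y < n, P y ∧ count P y = i := by
  classical
  induction n using Arith.induction with
  | definable => fun_prop
  | zero => exact absurd hi (by simp [count_zero hP])
  | succ n ih =>
    rcases lt_or_ge i (count P n) with h | h
    · obtain ⟨y, hy, hPy⟩ := ih h
      exact ⟨y, hy.trans (lt_add_one n), hPy⟩
    · by_cases hPn : P n
      · rw [count_succ hP, if_pos hPn, Order.lt_add_one_iff] at hi
        exact ⟨n, lt_add_one n, hPn, le_antisymm h hi⟩
      · rw [count_succ hP, if_neg hPn, add_zero] at hi
        exact absurd hi h.not_gt

theorem InternalCard.isDefinable {S : Set N} {c : N} (h : InternalCard S c) :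
    IsDefinable N fun y => y ∈ S := by
  obtain ⟨f, hf, hbij⟩ := h
  rw [definableFun₁_iff_isDefinable] at hf
  have hS : IsDefinable N fun y => ∃ i < c, f i = y := by fun_prop
  rwa [← hbij.image_eq]

theorem InternalCard.eq_count {S : Set N} {c n : N} (h : InternalCard S c)
    (hn : ∀ y ∈ S, y < n) : c = count (· ∈ S) n := by
  obtain ⟨f, hf, hbij⟩ := h
  rw [definableFun₁_iff_isDefinable] at hf
  rw [← hbij.image_eq]
  exact (count_image hf hbij.injOn fun i hi => hn _ (hbij.mapsTo hi)).symm

theorem internalCard_count {S : Set N} (hS : IsDefinable N fun y => y ∈ S) {n : N}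
    (hn : ∀ y ∈ S, y < n) : InternalCard S (count (· ∈ S) n) := by
  have hleast {y : N} (hy : y ∈ S) :
      least (fun z => z ∈ S ∧ count (· ∈ S) z = count (· ∈ S) y) = y :=
    least_eq ⟨hy, rfl⟩ fun z hz h => (count_lt_count hS h.1 hz).ne h.2
  refine ⟨fun i => least fun y => y ∈ S ∧ count (· ∈ S) y = i,
    definableFun₁_iff_isDefinable.2 (by fun_prop), ?_⟩
  have hinv : Set.InvOn (fun i => least fun y => y ∈ S ∧ count (· ∈ S) y = i) (count (· ∈ S)) S
      {i | ltM i (count (· ∈ S) n)} := by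
    refine ⟨fun y hy => hleast hy, fun i hi => ?_⟩
    obtain ⟨y, -, hy, rfl⟩ := exists_count_eq hS hi
    exact congrArg _ (hleast hy)
  refine hinv.symm.bijOn ?_ fun y hy => count_lt_count hS hy (hn y hy)
  intro i hi
  obtain ⟨y, -, hy, rfl⟩ := exists_count_eq hS hi
  exact (congrArg (· ∈ S) (hleast hy)).mpr hy

open Classical in
theorem card_filter_le_one_add_card_filter_offDiag {ι : Type*} (s : Finset ι) (P : ι → Prop) :
    (s.filter P).card ≤ 1 + (s.offDiag.filter fun p => P p.1 ∧ P p.2).card := by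
  have h : s.offDiag.filter (fun p => P p.1 ∧ P p.2) = (s.filter P).offDiag := by
    ext p
    simp only [Finset.mem_filter, Finset.mem_offDiag]
    tauto
  rw [h, Finset.offDiag_card]
  generalize (s.filter P).card = k
  rcases k with - | - | k
  · exact Nat.zero_le _
  · exact Nat.le_add_right _ _
  · exact le_add_left (Nat.le_sub_of_add_le (by nlinarith))

theorem sum_count_le_add_sum_offDiag {ι : Type*} (s : Finset ι) {P : ι → N → Prop}
    (hP : ∀ i, IsDefinable N (P i)) (n : N) :
    ∑ i ∈ s, count (P i) n ≤ n + ∑ p ∈ s.offDiag, count (fun y => P p.1 y ∧ P p.2 y) n := by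
  classical
  have hP' (p : ι × ι) : IsDefinable N fun y => P p.1 y ∧ P p.2 y := (hP p.1).and (hP p.2)
  induction n using Arith.induction with
  | definable => fun_prop
  | zero => simp only [count_zero (hP _), Finset.sum_const_zero, zero_le]
  | succ n ih =>
    have hpt : ((s.filter (P · n)).card : N) ≤
        1 + ((s.offDiag.filter fun p => P p.1 n ∧ P p.2 n).card : N) := by
      exact_mod_cast card_filter_le_one_add_card_filter_offDiag s (P · n)
    simp only [count_succ (hP _), count_succ (hP' _), Finset.sum_add_distrib, Finset.sum_boole]
    exact (add_le_add ih hpt).trans_eq (by ring)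

theorem exists_lt_mul_count_and {ι : Type*} {s : Finset ι} {v : ℕ} {D : N} {P : ι → N → Prop}
    (hP : ∀ i, IsDefinable N (P i)) (hcard : 2 * v < s.card)
    (hlarge : ∀ i ∈ s, D < v * count (P i) D) :
    ∃ i ∈ s, ∃ j ∈ s, i ≠ j ∧ D < (s.card ^ 2 : ℕ) * count (fun y => P i y ∧ P j y) D := by
  by_contra! hsmall
  have hs : s.Nonempty := Finset.card_pos.1 (pos_of_gt hcard)
  have hoff : ∑ p ∈ s.offDiag, count (fun y => P p.1 y ∧ P p.2 y) D ≤ D := by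
    have hpos : (0 : N) < (s.card ^ 2 : ℕ) := Nat.cast_pos.2 (pow_pos hs.card_pos 2)
    refine le_of_mul_le_mul_left ?_ hpos
    rw [Finset.mul_sum]
    calc ∑ p ∈ s.offDiag, ((s.card ^ 2 : ℕ) : N) * count (fun y => P p.1 y ∧ P p.2 y) D
        ≤ ∑ _p ∈ s.offDiag, D := Finset.sum_le_sum fun p hp => by
          obtain ⟨h1, h2, hne⟩ := Finset.mem_offDiag.1 hp
          exact hsmall p.1 h1 p.2 h2 hne
      _ = (s.offDiag.card : N) * D := by rw [Finset.sum_const, nsmul_eq_mul]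
      _ ≤ (s.card ^ 2 : ℕ) * D := by
        gcongr
        rw [Finset.offDiag_card, sq]
        exact Nat.sub_le _ _
  have hlt : ∑ _i ∈ s, D < ∑ i ∈ s, v * count (P i) D := Finset.sum_lt_sum_of_nonempty hs hlarge
  refine hlt.not_ge ?_
  calc ∑ i ∈ s, v * count (P i) D = v * ∑ i ∈ s, count (P i) D := (Finset.mul_sum ..).symm
    _ ≤ v * (D + D) := by
      gcongr
      exact (sum_count_le_add_sum_offDiag s hP D).trans (by gcongr)
    _ = (2 * v : ℕ) * D := by push_cast; ring
    _ ≤ s.card * D := by gcongr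
    _ = ∑ _i ∈ s, D := by rw [Finset.sum_const, nsmul_eq_mul]

end Counting

/-! ### Compatibility of conditions -/

section Conditions

variable {N : Type*} [arith.Structure N]

theorem reduct_rfl {n : ℕ} (h : n ≤ n) (φ : CFormula N n) :
    reduct h φ = φ := by
  rw [reduct, Formula.relabel]
  exact (BoundedFormula.relabel_sumInl φ).trans (BoundedFormula.castLE_rfl _ φ)

variable [Fact (IsPAModel N)]
theorem tupleCode_eq_sum (d : N) {n : ℕ} (b : (Fin n → Bool) → N) :
    tupleCode d b = ∑ j : Fin (2 ^ n), b (binOfFin j) * d ^ (j : ℕ) := by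
  rw [Fin.sum_univ_def, tupleCode]
  induction List.finRange (2 ^ n) with
  | nil => rfl
  | cons j l ih =>
    rw [List.foldr_cons, ih, List.map_cons, List.sum_cons]
    rfl

theorem sum_mul_pow_lt {d : N} {k : ℕ} {f : Fin k → N} (hf : ∀ j, f j < d) :
    ∑ j, f j * d ^ (j : ℕ) < d ^ k := by
  induction k with
  | zero => simp
  | succ k ih =>
    rw [Fin.sum_univ_castSucc, add_comm, pow_succ']
    exact mul_add_lt_mul (hf _) (ih fun j => hf j.castSucc)

theorem sum_mul_pow_inj {d : N} {k : ℕ} {f g : Fin k → N} (hf : ∀ j, f j < d)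
    (hg : ∀ j, g j < d) (h : ∑ j, f j * d ^ (j : ℕ) = ∑ j, g j * d ^ (j : ℕ)) : f = g := by
  induction k with
  | zero => exact Subsingleton.elim _ _
  | succ k ih =>
    rw [Fin.sum_univ_castSucc, Fin.sum_univ_castSucc, add_comm, add_comm (∑ _, _)] at h
    obtain ⟨hlast, hinit⟩ := mul_add_inj (sum_mul_pow_lt fun j => hf j.castSucc)
      (sum_mul_pow_lt fun j => hg j.castSucc) h
    have hcast := ih (fun j => hf _) (fun j => hg _) hinit
    exact funext (Fin.lastCases hlast (congrFun hcast))

theorem binOfFin_surjective (n : ℕ) : Function.Surjective (binOfFin (n := n)) := by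
  refine ((Fintype.bijective_iff_injective_and_card _).2 ⟨fun i j h => ?_, by simp⟩).2
  refine Fin.ext (Nat.eq_of_testBit_eq fun k => ?_)
  rcases lt_or_ge k n with hk | hk
  · exact congrFun h ⟨k, hk⟩
  · have hlt (m : Fin (2 ^ n)) : (m : ℕ) < 2 ^ k :=
      m.2.trans_le (Nat.pow_le_pow_right two_pos hk)
    rw [Nat.testBit_lt_two_pow (hlt i), Nat.testBit_lt_two_pow (hlt j)]

theorem tupleCode_lt {d : N} {n : ℕ} {b : (Fin n → Bool) → N} (hb : ∀ σ, b σ < d) :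
    tupleCode d b < d ^ 2 ^ n := by
  rw [tupleCode_eq_sum]
  exact sum_mul_pow_lt fun j => hb _

theorem tupleCode_inj {d : N} {n : ℕ} {b b' : (Fin n → Bool) → N} (hb : ∀ σ, b σ < d)
    (hb' : ∀ σ, b' σ < d) (h : tupleCode d b = tupleCode d b') : b = b' := by
  rw [tupleCode_eq_sum, tupleCode_eq_sum] at h
  have hdigits := sum_mul_pow_inj (fun j => hb _) (fun j => hb' _) h
  exact (binOfFin_surjective n).injective_comp_right hdigits

theorem realizationCodes_union {d : N} {n : ℕ} {P Q : Set (CFormula N n)}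
    (hP : ∀ b, RealizesAll P b → ∀ σ, b σ < d) (hQ : ∀ b, RealizesAll Q b → ∀ σ, b σ < d) :
    realizationCodes d (P ∪ Q) = realizationCodes d P ∩ realizationCodes d Q := by
  ext e
  constructor
  · rintro ⟨b, hb, rfl⟩
    exact ⟨⟨b, fun φ hφ => hb φ (Or.inl hφ), rfl⟩, ⟨b, fun φ hφ => hb φ (Or.inr hφ), rfl⟩⟩
  · rintro ⟨⟨b, hb, rfl⟩, ⟨b', hb', h⟩⟩
    obtain rfl := tupleCode_inj (hP b hb) (hQ b' hb') h
    exact ⟨b, fun φ hφ => hφ.elim (hb φ) (hb' φ), rfl⟩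

namespace Condition

variable {d : N}

/-- Two conditions are compatible if they have a common lower bound. -/
def Compatible (p q : Condition N d) : Prop :=
  ∃ r : Condition N d, CondLE r p ∧ CondLE r q

theorem lt_of_mem_realizationCodes (p : Condition N d) {e : N}
    (he : e ∈ realizationCodes d p.fmls) : e < d ^ 2 ^ p.n := by
  obtain ⟨b, hb, rfl⟩ := he
  exact tupleCode_lt (p.bounded b hb)

theorem isDefinable_realizationCodes (p : Condition N d) :
    IsDefinable N fun e => e ∈ realizationCodes d p.fmls := by
  obtain ⟨u, v, c, -, -, hc, -⟩ := p.large
  exact hc.isDefinable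

theorem exists_lt_mul_count (p : Condition N d) :
    ∃ v : ℕ, d ^ 2 ^ p.n < v * count (· ∈ realizationCodes d p.fmls) (d ^ 2 ^ p.n) := by
  obtain ⟨u, v, c, hu, -, hc, hlt⟩ := p.large
  rw [← hc.eq_count fun e he => p.lt_of_mem_realizationCodes he]
  exact ⟨v, (le_mul_of_one_le_left zero_le (Nat.one_le_cast.2 hu)).trans_lt hlt⟩

theorem compatible_of_internalCard_inter {p q : Condition N d} (hn : p.n = q.n) {c : N} {w : ℕ}
    (hc : InternalCard (realizationCodes d p.fmls ∩ realizationCodes d q.fmls) c)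
    (hw : d ^ 2 ^ p.n < w * c) : p.Compatible q := by
  cases p with | mk n P hPfin _ hPb _
  cases q with | mk m Q hQfin _ hQb _
  obtain rfl : n = m := hn
  rw [← realizationCodes_union hPb hQb] at hc
  have hwc : (w : N) * c ≠ 0 := (zero_le.trans_lt hw).ne'
  have hw0 : 0 < w := Nat.cast_pos.1 (pos_iff_ne_zero.2 (left_ne_zero_of_mul hwc))
  have hreal : ∃ b, RealizesAll (P ∪ Q) b := by
    obtain ⟨f, -, hf⟩ := hc
    obtain ⟨b, hb, -⟩ := hf.mapsTo (pos_iff_ne_zero.2 (right_ne_zero_of_mul hwc))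
    exact ⟨b, hb⟩
  have hw1 : ((1 : ℕ) : N) * d ^ 2 ^ n < w * c := by rwa [Nat.cast_one, one_mul]
  refine ⟨⟨n, P ∪ Q, hPfin.union hQfin, hreal, fun b hb => hPb b fun φ hφ => hb φ (Or.inl hφ),
    1, w, c, one_pos, hw0, hc, hw1⟩, ⟨le_rfl, fun ψ hψ => ?_⟩, ⟨le_rfl, fun ψ hψ => ?_⟩⟩
  · exact Or.inl (reduct_rfl le_rfl ψ ▸ hψ)
  · exact Or.inr (reduct_rfl le_rfl ψ ▸ hψ)

theorem finite_of_pairwise_not_compatible {A : Set (Condition N d)}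
    (hA : A.Pairwise fun p q => ¬ p.Compatible q) {n v : ℕ} (hn : ∀ p ∈ A, p.n = n)
    (hv : ∀ p ∈ A, d ^ 2 ^ n < v * count (· ∈ realizationCodes d p.fmls) (d ^ 2 ^ n)) :
    A.Finite := by
  by_contra hinf
  obtain ⟨s, hsA, hs⟩ := Set.Infinite.exists_subset_card_eq hinf (2 * v + 1)
  obtain ⟨p, hp, q, hq, hpq, hw⟩ := exists_lt_mul_count_and
    (P := fun p e => e ∈ realizationCodes d (Condition.fmls p)) isDefinable_realizationCodes
    (hs ▸ Nat.lt_succ_self _) fun p hp => hv p (hsA hp)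
  obtain rfl := hn p (hsA hp)
  refine hA (hsA hp) (hsA hq) hpq (compatible_of_internalCard_inter (hn q (hsA hq)).symm ?_ hw)
  exact internalCard_count (p.isDefinable_realizationCodes.and q.isDefinable_realizationCodes)
    fun e he => p.lt_of_mem_realizationCodes he.1

end Condition

end Conditions

end Arith

open Arith in
theorem statement_11_general (N : Type*) [arith.Structure N] (hN : IsPAModel N) (d : N)
    (A : Set (Condition N d))
    (hA : ∀ p ∈ A, ∀ q ∈ A, p ≠ q → ¬ ∃ r : Condition N d, CondLE r p ∧ CondLE r q) :
    A.Countable := by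
  have : Fact (IsPAModel N) := ⟨hN⟩
  choose v hv using fun p : Condition N d => p.exists_lt_mul_count
  have hcover : A = ⋃ k : ℕ × ℕ, {p ∈ A | p.n = k.1 ∧ v p = k.2} := by
    ext p
    simp
  rw [hcover]
  refine Set.countable_iUnion fun ⟨n, w⟩ => Set.Finite.countable ?_
  refine Condition.finite_of_pairwise_not_compatible (n := n) (v := w)
    (fun p hp q hq => hA p hp.1 q hq.1) (fun p hp => hp.2.1) ?_
  rintro p ⟨-, rfl, rfl⟩
  exact hv p

open Arith in
/-- The poset `P` of conditions satisfies the countable chain condition, even when the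
underlying model `N` of `PA` is uncountable: every set of pairwise incompatible
conditions is countable. -/
theorem statement_11 (N : Type*) [arith.Structure N] (hN : NonstandardModel N)
    (a d : N) (ha : ¬ IsStd a) (hd : IsPow2 a d)
    (A : Set (Condition N d))
    (hA : ∀ p ∈ A, ∀ q ∈ A, p ≠ q → ¬ ∃ r : Condition N d, CondLE r p ∧ CondLE r q) :
    A.Countable :=
  statement_11_general N hN.1 d A hA
end

section
/- (ZFC + MA) Suppose M is a countable non-standard model of PA, A ⊆ 2^ω has cardinality < 2^ω, and B ⊆ 2^ω is countable and such that the Turing ideal generated by SSy(M) ∪ B is disjoint from A. Then there exists a family (M_X : X ⊆ 2^ω) of models such that each M_X is an elementary extension of M, B ⊆ SSy(M_X), |M_X| = |SSy(M_X)| = max{ω, |X|}, and for all X, Y ⊆ 2^ω: X ⊆ Y ⟺ M_X ≼ M_Y ⟺ SSy(M_X) ⊆ SSy(M_Y). -/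
open FirstOrder FirstOrder.Language

namespace Arith

/-- Relativized partial recursiveness: `RecursiveIn O f` means the partial function `f`
is partial recursive in the total oracle `O`.  This mirrors `Nat.Partrec`, with an extra
constructor for the oracle. -/
inductive RecursiveIn (O : ℕ → ℕ) : (ℕ →. ℕ) → Prop
  | zero : RecursiveIn O (pure 0)
  | succ : RecursiveIn O Nat.succ
  | left : RecursiveIn O ↑fun n : ℕ => n.unpair.1
  | right : RecursiveIn O ↑fun n : ℕ => n.unpair.2
  | oracle : RecursiveIn O O
  | pair {f g} : RecursiveIn O f → RecursiveIn O g →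
      RecursiveIn O fun n => Nat.pair <$> f n <*> g n
  | comp {f g} : RecursiveIn O f → RecursiveIn O g → RecursiveIn O fun n => g n >>= f
  | prec {f g} : RecursiveIn O f → RecursiveIn O g → RecursiveIn O (Nat.unpaired fun a n =>
      n.rec (f a) fun y IH => do let i ← IH; g (Nat.pair a (Nat.pair y i)))
  | rfind {f} : RecursiveIn O f →
      RecursiveIn O fun a => Nat.rfind fun n => (fun m => m = 0) <$> f (Nat.pair a n)

open Classical in
/-- The characteristic function of a set of natural numbers. -/
noncomputable def charFn (X : Set ℕ) : ℕ → ℕ := fun n => if n ∈ X then 1 else 0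

/-- Turing reducibility between sets of natural numbers. -/
def TuringLE (Y X : Set ℕ) : Prop := RecursiveIn (charFn X) (charFn Y)

/-- The Turing join `X ⊕ Y = 2X ∪ (2Y + 1)`. -/
def turingJoin (X Y : Set ℕ) : Set ℕ :=
  {n | ∃ m ∈ X, n = 2 * m} ∪ {n | ∃ m ∈ Y, n = 2 * m + 1}

/-- A Turing ideal: a collection of subsets of `ℕ` closed under Turing join and Turing
reducibility. -/
def TuringIdeal (S : Set (Set ℕ)) : Prop :=
  (∀ X ∈ S, ∀ Y ∈ S, turingJoin X Y ∈ S) ∧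
  (∀ X ∈ S, ∀ Y : Set ℕ, TuringLE Y X → Y ∈ S)

/-- The Turing ideal generated by a collection of subsets of `ℕ`. -/
def tIdealGen (C : Set (Set ℕ)) : Set (Set ℕ) :=
  ⋂₀ {I | TuringIdeal I ∧ C ⊆ I}

/-- `T ⊆ ℕ` codes a binary tree: the set of finite binary sequences whose codes lie in
`T` is closed under initial segments. -/
def IsBinTreeSet (T : Set ℕ) : Prop :=
  ∀ s : List Bool, Encodable.encode s ∈ T → ∀ t : List Bool, t <+: s → Encodable.encode t ∈ T

/-- The tree coded by `T` is infinite. -/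
def TreeInf (T : Set ℕ) : Prop := {s : List Bool | Encodable.encode s ∈ T}.Infinite

/-- `P ⊆ ℕ`, viewed as an infinite branch via its characteristic function, is a path
through the tree coded by `T`. -/
def PathThrough (P T : Set ℕ) : Prop :=
  ∀ f : ℕ → Bool, (∀ i : ℕ, f i = true ↔ i ∈ P) →
    ∀ m : ℕ, Encodable.encode (List.ofFn fun i : Fin m => f i) ∈ T

/-- A Scott set: a nonempty Turing ideal such that every infinite binary tree in it has
an infinite path in it. -/
def ScottSet (S : Set (Set ℕ)) : Prop :=
  S.Nonempty ∧ TuringIdeal S ∧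
  ∀ T ∈ S, IsBinTreeSet T → TreeInf T → ∃ P ∈ S, PathThrough P T

open Classical in
/-- The characteristic function of a set, with values in `Bool`. -/
noncomputable def chi (X : Set ℕ) : ℕ → Bool := fun n => if n ∈ X then true else false

/-- The iterated Turing join `⊕_{i<k} X i`. -/
def joinMany : {k : ℕ} → (Fin k → Set ℕ) → Set ℕ
  | 0, _ => ∅
  | (k + 1), X => turingJoin (joinMany fun i => X i.castSucc) (X (Fin.last k))

end Arith

namespace Arith

/-- `D` is dense (below) in the order `le`. -/
def DenseBelow {P : Type} (le : P → P → Prop) (D : Set P) : Prop :=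
  ∀ p : P, ∃ q ∈ D, le q p

/-- Two elements are compatible if they have a common lower bound. -/
def OrdCompatible {P : Type} (le : P → P → Prop) (p q : P) : Prop :=
  ∃ r, le r p ∧ le r q

/-- The countable chain condition: every antichain (set of pairwise incompatible
elements) is countable. -/
def CCC {P : Type} (le : P → P → Prop) : Prop :=
  ∀ A : Set P, (∀ p ∈ A, ∀ q ∈ A, p ≠ q → ¬ OrdCompatible le p q) → A.Countable

/-- A filter on a preorder: a nonempty, upward closed, downward directed set. -/
def IsFilterOn {P : Type} (le : P → P → Prop) (F : Set P) : Prop :=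
  F.Nonempty ∧ (∀ p ∈ F, ∀ q : P, le p q → q ∈ F) ∧
    (∀ p ∈ F, ∀ q ∈ F, ∃ r ∈ F, le r p ∧ le r q)

/-- Martin's Axiom: for every nonempty ccc preorder `P` and every family of fewer than
continuum many dense subsets of `P`, there is a filter on `P` meeting every set in the
family. -/
def MartinsAxiom : Prop :=
  ∀ (P : Type) (le : P → P → Prop), Nonempty P → Reflexive le → Transitive le → CCC le →
    ∀ D : Set (Set P), Cardinal.mk D < 2 ^ Cardinal.aleph0 →
      (∀ d ∈ D, DenseBelow le d) →
      ∃ F : Set P, IsFilterOn le F ∧ ∀ d ∈ D, (F ∩ d).Nonempty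

end Arith

/-!
Let `M` be expanded by constants and Skolem functions, and let `g₀, g₁, …` be its term operations.
The idea is to attach to every real `x` an element `c x` of an ultrapower of `M` whose binary digits
are not those of any element generated by the `c y` with `y ≠ x`; the Skolem hull `M_X` of
`{c x | x ∈ X}` then codes the digit set of `c x` if and only if `x ∈ X`. If `M` is first replaced
by a countable elementary extension coding `B` and the finite sets, the inclusions and cardinalities
follow.

The element `c x` is the class of a sequence whose `n`-th term codes a finite string attached to
`x ↾ n`. Only finitely many operations matter at level `n`, and they are read as operations on
strings. A constraint newly imposed at a level, namely that `g_s` of some strings differs from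
another one among the first `h` digits, fails for random strings with probability at most `2⁻ʰ`. The
older constraints have to hold for each choice of one successor above every node; by iterated
Cauchy–Schwarz (the box-norm inequality) the probability of this is at least a fixed power of the
probability at the previous level. Hence, for `h` growing fast enough, a good choice of strings
exists at every level.
-/

section Density

open Finset Function
open scoped BigOperators

theorem dens_filter_eq_expect {α : Type*} [Fintype α] (p : α → Prop) [DecidablePred p] :
    dens {a | p a} = 𝔼 a, (if p a then 1 else 0 : ℚ≥0) := by
  rw [Fintype.expect_eq_sum_div_card, sum_boole, dens_eq_card_div_card]

variable {ι κ α R : Type*} [Fintype κ] [DecidableEq κ] [Fintype α] [Nonempty α]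

section Expect

variable [AddCommMonoid R] [Module ℚ≥0 R]

theorem expect_comp_of_injective [Fintype ι] [DecidableEq ι] {e : ι → κ}
    (he : Injective e) (f : (ι → α) → R) : 𝔼 v : κ → α, f (v ∘ e) = 𝔼 w, f w := by
  classical
  let split : (κ → α) ≃ (ι → α) × ({k // k ∉ Set.range e} → α) :=
    (Equiv.piEquivPiSubtypeProd (· ∈ Set.range e) fun _ => α).trans
      ((Equiv.ofInjective e he).symm.arrowCongr (Equiv.refl α) |>.prodCongr (Equiv.refl _))
  calc 𝔼 v : κ → α, f (v ∘ e)
      = 𝔼 p : (ι → α) × ({k // k ∉ Set.range e} → α), f p.1 :=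
        Fintype.expect_equiv split _ _ fun _ => rfl
    _ = 𝔼 w, f w := by
        rw [← univ_product_univ, expect_product]
        simp only [Fintype.expect_const]

theorem expect_expect_update (a : κ) (f : (κ → α) → R) :
    𝔼 v : κ → α, 𝔼 u : α, f (update v a u) = 𝔼 v, f v := by
  let swap : (κ → α) × α ≃ (κ → α) × α :=
    { toFun := fun p => (update p.1 a p.2, p.1 a)
      invFun := fun p => (update p.1 a p.2, p.1 a)
      left_inv := fun p => by simp
      right_inv := fun p => by simp }
  calc 𝔼 v : κ → α, 𝔼 u : α, f (update v a u)
      = 𝔼 p : (κ → α) × α, f (update p.1 a p.2) := by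
        rw [← univ_product_univ, expect_product]
    _ = 𝔼 p : (κ → α) × α, f p.1 := Fintype.expect_equiv swap _ _ fun _ => rfl
    _ = 𝔼 v, f v := by
        rw [← univ_product_univ, expect_product]
        simp only [Fintype.expect_const]

end Expect

section BoxNorm

variable [CommSemiring R] [LinearOrder R] [IsStrictOrderedRing R] [ExistsAddOfLE R]
  [Module ℚ≥0 R] [PosSMulMono ℚ≥0 R] [IsScalarTower ℚ≥0 R R] [SMulCommClass ℚ≥0 R R]

-- Cauchy–Schwarz in the coordinate `a`: as `f` ignores `b`, this coordinate is free to hold the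
-- second copy of `a`.
theorem sq_expect_le_expect_mul_update {a b : κ} (hab : a ≠ b) (f : (κ → α) → R)
    (hf : ∀ v u, f (update v b u) = f v) :
    (𝔼 v, f v) ^ 2 ≤ 𝔼 v, f v * f (update v a (v b)) :=
  calc (𝔼 v, f v) ^ 2
      = (𝔼 v, (𝔼 u, f (update v a u)) * 1) ^ 2 := by
        simp only [mul_one, expect_expect_update]
    _ ≤ (𝔼 v, (𝔼 u, f (update v a u)) ^ 2) * 𝔼 _v : κ → α, (1 : R) ^ 2 :=
        expect_mul_sq_le_sq_mul_sq _ _ _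
    _ = 𝔼 v, 𝔼 u, f (update v a u) * 𝔼 u', f (update v a u') := by
        simp only [Fintype.expect_one, mul_one, sq, expect_mul]
    _ = 𝔼 v, f v * 𝔼 u, f (update v a u) := by
        rw [← expect_expect_update a fun v => f v * 𝔼 u, f (update v a u)]
        simp only [update_idem]
    _ = 𝔼 v, 𝔼 u, f (update v b u) * f (update (update v b u) a (update v b u b)) := by
        simp only [mul_expect, hf, update_self, update_comm hab.symm]
    _ = 𝔼 v, f v * f (update v a (v b)) :=
        expect_expect_update b fun v => f v * f (update v a (v b))

variable [Fintype ι] [DecidableEq ι]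

theorem pow_expect_le_expect_prod_powerset {e : ι × Bool → κ} (he : Injective e)
    {f : (ι → α) → R} (hf : ∀ w, 0 ≤ f w) (J : Finset ι) :
    (𝔼 w, f w) ^ 2 ^ #J ≤
      𝔼 v : κ → α, ∏ s ∈ J.powerset, f fun i => v (e (i, decide (i ∈ s))) := by
  induction J using Finset.induction_on with
  | empty =>
    have base := expect_comp_of_injective (α := α) (he.comp (Prod.mk_left_injective false)) f
    simpa [comp_def] using base.ge
  | insert j J hj ih =>
    let F : (κ → α) → R := fun v => ∏ s ∈ J.powerset, f fun i => v (e (i, decide (i ∈ s)))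
    have ne_of_mem {s : Finset ι} (hs : s ∈ J.powerset) (i : ι) (h : i ∈ s) : i ≠ j :=
      fun hij => hj (mem_powerset.1 hs (hij ▸ h))
    have F_update (v : κ → α) (u : α) : F (update v (e (j, true)) u) = F v := by
      refine prod_congr rfl fun s hs => congrArg f <| funext fun i => update_of_ne (he.ne ?_) _ _
      simpa [imp_not_comm] using ne_of_mem hs i
    have F_swap (v : κ → α) : F (update v (e (j, false)) (v (e (j, true)))) =
        ∏ s ∈ J.powerset, f fun i => v (e (i, decide (i ∈ insert j s))) := by
      refine prod_congr rfl fun s hs => congrArg f <| funext fun i => ?_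
      by_cases hij : i = j
      · have : j ∉ s := fun h => ne_of_mem hs j h rfl
        simp [hij, this]
      · simp [update_of_ne (he.ne _), hij]
    calc (𝔼 w, f w) ^ 2 ^ #(insert j J) = ((𝔼 w, f w) ^ 2 ^ #J) ^ 2 := by
          rw [card_insert_of_notMem hj, pow_succ 2, pow_mul]
      _ ≤ (𝔼 v, F v) ^ 2 :=
          pow_le_pow_left₀ (pow_nonneg (expect_nonneg fun w _ => hf w) _) ih 2
      _ ≤ 𝔼 v, F v * F (update v (e (j, false)) (v (e (j, true)))) :=
          sq_expect_le_expect_mul_update (he.ne (by simp)) F F_update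
      _ = _ := by simp only [F_swap, prod_powerset_insert hj, F]

end BoxNorm

theorem dens_filter_comp [Fintype ι] [DecidableEq ι] {e : ι → κ} (he : Injective e)
    (p : (ι → α) → Prop) [DecidablePred p] :
    dens {v : κ → α | p (v ∘ e)} = dens {w | p w} := by
  simp only [dens_filter_eq_expect]
  exact expect_comp_of_injective he fun w => if p w then 1 else 0

theorem pow_dens_filter_le_dens_filter_forall [Fintype ι] [DecidableEq ι] {e : ι × Bool → κ}
    (he : Injective e) (p : (ι → α) → Prop) [DecidablePred p] :
    dens {w | p w} ^ 2 ^ Fintype.card ι ≤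
      dens {v : κ → α | ∀ b : ι → Bool, p fun i => v (e (i, b i))} := by
  have box := pow_expect_le_expect_prod_powerset he (f := fun w => (if p w then 1 else 0 : ℚ≥0))
    (fun _ => zero_le) univ
  simp only [prod_boole, powerset_univ, mem_univ, true_imp_iff, ← dens_filter_eq_expect] at box
  refine box.trans (dens_le_dens fun v => ?_)
  simpa using fun h b => by simpa using h {i | b i}

theorem dens_filter_comp_apply_le {ρ : ι → κ} {a : κ} (ha : a ∉ Set.range ρ)
    (r : (ι → α) → α → Prop) [∀ w, DecidablePred (r w)] {δ : ℚ≥0}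
    (hδ : ∀ w, dens {u | r w u} ≤ δ) :
    dens {v : κ → α | r (v ∘ ρ) (v a)} ≤ δ := by
  calc dens {v : κ → α | r (v ∘ ρ) (v a)}
      = 𝔼 v : κ → α, 𝔼 u, (if r (v ∘ ρ) u then 1 else 0 : ℚ≥0) := by
        rw [dens_filter_eq_expect, ← expect_expect_update a]
        simp only [update_self, update_comp_eq_of_notMem_range _ _ ha]
    _ ≤ δ := expect_le univ_nonempty fun v _ => by
        simpa only [dens_filter_eq_expect] using hδ (v ∘ ρ)

theorem dens_filter_forall_lt_eq [DecidableEq α] {h m : ℕ} (hm : h ≤ m) (w : Fin m → α) :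
    dens {u : Fin m → α | ∀ i : Fin m, i < h → w i = u i} = ((Fintype.card α : ℚ≥0) ^ h)⁻¹ := by
  calc dens {u : Fin m → α | ∀ i : Fin m, i < h → w i = u i}
      = dens {u : Fin m → α | w ∘ Fin.castLE hm = u ∘ Fin.castLE hm} := by
        congr! with u
        exact ⟨fun H => funext fun i => H _ i.2, fun H i hi => congrFun H ⟨i, hi⟩⟩
    _ = dens {w ∘ Fin.castLE hm} := by
        rw [dens_filter_comp (Fin.castLE_injective hm) (w ∘ Fin.castLE hm = ·), filter_eq,
          if_pos (mem_univ _)]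
    _ = ((Fintype.card α : ℚ≥0) ^ h)⁻¹ := by simp

end Density

section IndependentStrings

open Finset Function

variable {k : ℕ → ℕ} {m n : ℕ}

/-- The strings `v x`, one for each binary sequence `x` of length `n`, are *independent* for the
operations `g s` with precisions `h`: if the sequences `x` and `y j` are still told apart by their
first `l` terms and `s < l`, then `g s` applied to the strings `v (y j)` already differs from `v x`
below `h l`. -/
def StringsIndependent (h : ℕ → ℕ) (g : ∀ s, (Fin (k s) → Fin m → Bool) → Fin m → Bool)
    (v : (Fin n → Bool) → Fin m → Bool) : Prop :=
  ∀ (l : ℕ) (hl : l ≤ n), ∀ s < l, ∀ (y : Fin (k s) → Fin n → Bool) (x : Fin n → Bool),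
    x ∉ Set.range y → Set.InjOn (· ∘ Fin.castLE hl) (insert x (Set.range y)) →
      ∃ i : Fin m, i < h l ∧ g s (v ∘ y) i ≠ v x i

/-- The triples `(s, y, x)` constrained by `StringsIndependent` at the level `l = n`. -/
abbrev LevelConstraint (k : ℕ → ℕ) (n : ℕ) : Type :=
  Σ s : Fin n, (Fin (k s) → Fin n → Bool) × (Fin n → Bool)

variable {h : ℕ → ℕ} {g : ∀ s, (Fin (k s) → Fin m → Bool) → Fin m → Bool}

open Classical in
theorem dens_levelConstraint_violated_le (hm : h n ≤ m) :
    dens {v : (Fin n → Bool) → Fin m → Bool | ∃ c : LevelConstraint k n,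
      c.2.2 ∉ Set.range c.2.1 ∧ ∀ i : Fin m, i < h n → g c.1 (v ∘ c.2.1) i = v c.2.2 i} ≤
      Fintype.card (LevelConstraint k n) / 2 ^ h n := by
  let violated (c : LevelConstraint k n) : Finset ((Fin n → Bool) → Fin m → Bool) :=
    {v | c.2.2 ∉ Set.range c.2.1 ∧ ∀ i : Fin m, i < h n → g c.1 (v ∘ c.2.1) i = v c.2.2 i}
  have dens_violated (c : LevelConstraint k n) : (violated c).dens ≤ (2 ^ h n)⁻¹ := by
    by_cases hc : c.2.2 ∈ Set.range c.2.1
    · simp only [violated, hc, not_true_eq_false, false_and, filter_false, dens_empty, zero_le]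
    · simpa only [violated, hc, not_false_eq_true, true_and, Fintype.card_bool,
        Nat.cast_ofNat] using
        dens_filter_comp_apply_le hc (fun w u => ∀ i : Fin m, i < h n → g c.1 w i = u i)
          fun w => (dens_filter_forall_lt_eq hm (g c.1 w)).le
  calc _ = (univ.biUnion violated).dens := by congr 1; ext v; simp [violated]
    _ ≤ ∑ c, (violated c).dens := dens_biUnion_le
    _ ≤ ∑ _c : LevelConstraint k n, (2 ^ h n)⁻¹ := sum_le_sum fun c _ => dens_violated c
    _ = _ := by rw [sum_const, nsmul_eq_mul, Finset.card_univ, div_eq_mul_inv]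

theorem StringsIndependent.succ {v : (Fin (n + 1) → Bool) → Fin m → Bool}
    (hv : ∀ b : (Fin n → Bool) → Bool,
      StringsIndependent h g fun σ => v (Fin.snoc (α := fun _ => Bool) σ (b σ)))
    (hlevel : ∀ c : LevelConstraint k (n + 1), c.2.2 ∉ Set.range c.2.1 →
      ∃ i : Fin m, i < h (n + 1) ∧ g c.1 (v ∘ c.2.1) i ≠ v c.2.2 i) :
    StringsIndependent h g v := by
  intro l hl s hs y x hx hinj
  rcases hl.eq_or_lt with rfl | hln
  · exact hlevel ⟨⟨s, hs⟩, y, x⟩ hx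
  let S : Set (Fin (n + 1) → Bool) := insert x (Set.range y)
  let prefixOf (z : Fin (n + 1) → Bool) : Fin n → Bool := Fin.init z
  have hcast : Set.InjOn ((· ∘ Fin.castLE (Nat.lt_succ_iff.1 hln)) ∘ prefixOf) S := hinj
  have hinit : Set.InjOn prefixOf S := hcast.of_comp
  let b (σ : Fin n → Bool) : Bool := invFunOn prefixOf S σ (Fin.last n)
  have snoc_init {z : Fin (n + 1) → Bool} (hz : z ∈ S) :
      (Fin.snoc (prefixOf z) (b (prefixOf z)) : Fin (n + 1) → Bool) = z := by
    rw [show b (prefixOf z) = z (Fin.last n) from congrFun (hinit.leftInvOn_invFunOn hz) _]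
    exact Fin.snoc_init_self z
  have hxS : x ∈ S := Set.mem_insert x _
  have hyS (j : Fin (k s)) : y j ∈ S := Set.mem_insert_of_mem x ⟨j, rfl⟩
  have hx' : prefixOf x ∉ Set.range (prefixOf ∘ y) := fun ⟨j, hj⟩ => hx ⟨j, hinit (hyS j) hxS hj⟩
  have hinj' : Set.InjOn (· ∘ Fin.castLE (Nat.lt_succ_iff.1 hln))
      (insert (prefixOf x) (Set.range (prefixOf ∘ y))) := by
    rw [Set.range_comp, ← Set.image_insert_eq]
    exact hcast.image_of_comp
  simpa only [comp_def, snoc_init hxS, snoc_init (hyS _)] using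
    hv b l (Nat.lt_succ_iff.1 hln) s hs (prefixOf ∘ y) (prefixOf x) hx' hinj'

open Classical in
theorem dens_stringsIndependent_succ (hm : h (n + 1) ≤ m) :
    dens {v : (Fin n → Bool) → Fin m → Bool | StringsIndependent h g v} ^ 2 ^ 2 ^ n ≤
      dens {v : (Fin (n + 1) → Bool) → Fin m → Bool | StringsIndependent h g v} +
        Fintype.card (LevelConstraint k (n + 1)) / 2 ^ h (n + 1) := by
  have snoc_injective : Injective fun p : (Fin n → Bool) × Bool =>
      (Fin.snoc p.1 p.2 : Fin (n + 1) → Bool) := fun p q hpq =>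
    Prod.ext (Fin.snoc_injective2 hpq).1 (Fin.snoc_injective2 hpq).2
  let good : Finset ((Fin (n + 1) → Bool) → Fin m → Bool) := {v | StringsIndependent h g v}
  let violating : Finset ((Fin (n + 1) → Bool) → Fin m → Bool) :=
    {v | ∃ c : LevelConstraint k (n + 1),
      c.2.2 ∉ Set.range c.2.1 ∧ ∀ i : Fin m, i < h (n + 1) → g c.1 (v ∘ c.2.1) i = v c.2.2 i}
  calc dens {v : (Fin n → Bool) → Fin m → Bool | StringsIndependent h g v} ^ 2 ^ 2 ^ n
      ≤ dens {v : (Fin (n + 1) → Bool) → Fin m → Bool | ∀ b : (Fin n → Bool) → Bool,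
          StringsIndependent h g fun σ => v (Fin.snoc (α := fun _ => Bool) σ (b σ))} := by
        simpa using pow_dens_filter_le_dens_filter_forall snoc_injective
          (StringsIndependent h g)
    _ ≤ dens (good ∪ violating) := dens_le_dens fun v hv => by
        simp only [good, violating, mem_union, mem_filter, mem_univ, true_and] at hv ⊢
        by_contra! H
        exact H.1 (.succ hv H.2)
    _ ≤ _ := (dens_union_le _ _).trans
        (add_le_add_right (dens_levelConstraint_violated_le hm) _)

/-- A lower bound for the density of the independent families of strings: doubling the index set
raises the density to the power `2 ^ 2 ^ n`, and half of the result is left for the constraints of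
the new level. -/
def independenceDensity : ℕ → ℚ≥0
  | 0 => 1
  | n + 1 => independenceDensity n ^ 2 ^ 2 ^ n / 2

theorem independenceDensity_pos : ∀ n, 0 < independenceDensity n
  | 0 => one_pos
  | n + 1 => div_pos (pow_pos (independenceDensity_pos n) _) two_pos

open Classical in
theorem independenceDensity_le_dens
    (hh : ∀ l, Fintype.card (LevelConstraint k l) / 2 ^ h l ≤ independenceDensity l) :
    ∀ {n}, (∀ l ≤ n, h l ≤ m) → independenceDensity n ≤
      dens {v : (Fin n → Bool) → Fin m → Bool | StringsIndependent h g v}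
  | 0, _ => by
    have (v : (Fin 0 → Bool) → Fin m → Bool) : StringsIndependent h g v := fun l hl s hs =>
      absurd (hs.trans_le hl) s.not_lt_zero
    simp [this, independenceDensity]
  | n + 1, hm => by
    have ih := independenceDensity_le_dens hh (n := n) fun l hl => hm l (hl.trans n.le_succ)
    have step := (pow_le_pow_left₀ zero_le ih (2 ^ 2 ^ n)).trans
      ((dens_stringsIndependent_succ (hm _ le_rfl)).trans (add_le_add_right (hh (n + 1)) _))
    have half : independenceDensity (n + 1) + independenceDensity (n + 1) =
      independenceDensity n ^ 2 ^ 2 ^ n := add_halves _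
    rw [← half] at step
    exact le_of_add_le_add_right step

theorem exists_stringsIndependent (k : ℕ → ℕ) :
    ∃ h : ℕ → ℕ, ∀ {n m : ℕ}, (∀ l ≤ n, h l ≤ m) →
      ∀ g : ∀ s, (Fin (k s) → Fin m → Bool) → Fin m → Bool,
        ∃ v : (Fin n → Bool) → Fin m → Bool, StringsIndependent h g v := by
  classical
  have exists_precision (l : ℕ) :
      ∃ h : ℕ, (Fintype.card (LevelConstraint k l) / 2 ^ h : ℚ≥0) ≤ independenceDensity l := by
    obtain ⟨h, hh⟩ := pow_unbounded_of_one_lt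
      (Fintype.card (LevelConstraint k l) / independenceDensity l) one_lt_two
    exact ⟨h, (div_le_comm₀ (independenceDensity_pos l) (by positivity)).1 hh.le⟩
  choose h hh using exists_precision
  refine ⟨h, fun {n m} hm g => ?_⟩
  obtain ⟨v, hv⟩ := dens_pos.1
    ((independenceDensity_pos n).trans_le (independenceDensity_le_dens (g := g) hh hm))
  exact ⟨v, (mem_filter.1 hv).2⟩

end IndependentStrings

section SkolemHull

open FirstOrder Cardinal Filter Structure

universe u v u' v' w

/-- The language `L'` provides Skolem functions on the structure `N` for all `L`-formulas. -/
def HasSkolemFunctions (L : FirstOrder.Language.{u, v}) (L' : FirstOrder.Language.{u', v'})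
    (N : Type w) [L.Structure N] [L'.Structure N] : Prop :=
  ∀ ⦃n : ℕ⦄ (φ : L.BoundedFormula Empty (n + 1)), ∃ f : L'.Functions n, ∀ (x : Fin n → N) (a : N),
    φ.Realize default (Fin.snoc x a) → φ.Realize default (Fin.snoc x (funMap f x))

theorem exists_countable_skolem_expansion (L : FirstOrder.Language.{u, v}) (M : Type w)
    [L.Structure M] [Countable L.Symbols] [Countable M] [Nonempty M] :
    ∃ (L' : FirstOrder.Language.{max u v w, v}) (φ : L →ᴸ L') (_ : L'.Structure M),
      φ.IsExpansionOn M ∧ HasSkolemFunctions L L' M ∧ Countable (Σ n, L'.Functions n) ∧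
        ∀ a : M, ∃ f : L'.Functions 0, funMap f default = a := by
  refine ⟨L[[M]].sum L[[M]].skolem₁, LHom.sumInl.comp (L.lhomWithConstants M), inferInstance,
    ⟨fun _ _ => rfl, fun _ _ => rfl⟩, fun n φ => ?_, ?_, fun a => ⟨Sum.inl (L.con a), rfl⟩⟩
  · let ψ : L[[M]].BoundedFormula Empty (n + 1) := (L.lhomWithConstants M).onBoundedFormula φ
    have realize_ψ (x : Fin (n + 1) → M) : ψ.Realize default x ↔ φ.Realize default x :=
      LHom.realize_onBoundedFormula _ φ
    refine ⟨Sum.inr ψ, fun x a h => (realize_ψ _).1 ?_⟩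
    exact Classical.epsilon_spec (p := fun b => ψ.Realize default (Fin.snoc x b : Fin (n + 1) → M))
      ⟨a, (realize_ψ _).2 h⟩
  · rw [← mk_le_aleph0_iff]
    exact card_functions_sum_skolem₁_le.trans (max_le le_rfl (mk_le_aleph0_iff.2 inferInstance))

section Hull

variable {L : FirstOrder.Language.{u, v}} {L' : FirstOrder.Language.{u', v'}} {N : Type w}
  [L.Structure N] [L'.Structure N] (φ : L →ᴸ L') [φ.IsExpansionOn N]

/-- The elementary substructure generated by `s` under the operations of a language with Skolem
functions. -/
def skolemHull (hL' : HasSkolemFunctions L L' N) (s : Set N) : L.ElementarySubstructure N :=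
  (φ.substructureReduct (Substructure.closure L' s)).toElementarySubstructure fun _ ψ x a h =>
    let ⟨f, hf⟩ := hL' ψ
    ⟨⟨_, (Substructure.closure L' s).fun_mem f _ fun i => (x i).2⟩, hf _ a h⟩

theorem mk_skolemHull_le [Countable (Σ n, L'.Functions n)] (hL' : HasSkolemFunctions L L' N)
    (s : Set N) : #(skolemHull φ hL' s) ≤ max ℵ₀ #s := by
  have card_closure := Substructure.lift_card_closure_le (L := L') (s := s)
  rw [← Cardinal.lift_le.{u'}, lift_max, lift_aleph0]
  have card_functions : lift.{w} #(Σ n, L'.Functions n) ≤ ℵ₀ :=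
    lift_le_aleph0.2 (mk_le_aleph0_iff.2 inferInstance)
  exact card_closure.trans (max_le (le_max_left _ _) ((add_le_max _ _).trans
    (max_le (max_le (le_max_right _ _) (card_functions.trans (le_max_left _ _)))
      (le_max_left _ _))))

end Hull

theorem exists_term_fin_of_mem_closure {L : FirstOrder.Language.{u, v}} {N : Type w} [L.Structure N]
    {V : Type*} {c : V → N} {X : Set V} {a : N} (ha : a ∈ Substructure.closure L (c '' X)) :
    ∃ (k : ℕ) (t : L.Term (Fin k)) (y : Fin k → V), (∀ j, y j ∈ X) ∧ t.realize (c ∘ y) = a := by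
  classical
  obtain ⟨t, rfl⟩ := Substructure.mem_closure_iff_exists_term.1 ha
  choose pre pre_mem c_pre using fun z : c '' X => z.2
  let e := t.varFinset.equivFin
  refine ⟨_, t.restrictVar e, fun j => pre (e.symm j), fun j => pre_mem _, ?_⟩
  exact Term.realize_restrictVar _ fun z => by simp [c_pre]

section Ultrapower

variable {ι : Type*} {M : Type w} {u : Ultrafilter ι} {L : FirstOrder.Language.{u, v}}
  [L.Structure M]

theorem relMap_ultraproduct_cast {M : ι → Type*} [∀ a, L.Structure (M a)] {n : ℕ}
    (r : L.Relations n) (x : Fin n → ∀ a, M a) :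
    (RelMap r fun i => (x i : (u : Filter ι).Product M)) ↔ ∀ᶠ a in u, RelMap r fun i => x i a :=
  relMap_quotient_mk' _ r x

instance isExpansionOn_ultrapower {L' : FirstOrder.Language.{u', v'}} [L'.Structure M] (φ : L →ᴸ L')
    [φ.IsExpansionOn M] : φ.IsExpansionOn ((u : Filter ι).Product fun _ => M) where
  map_onFunction {n} f x := by
    induction x using Quotient.induction_on_pi with | _ x
    refine (Ultraproduct.funMap_cast (φ.onFunction f) x).trans ?_
    simp only [φ.map_onFunction]
    exact (Ultraproduct.funMap_cast f x).symm
  map_onRelation {n} r x := by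
    induction x using Quotient.induction_on_pi with | _ x
    refine propext ((relMap_ultraproduct_cast (φ.onRelation r) x).trans ?_)
    simp only [φ.map_onRelation]
    exact (relMap_ultraproduct_cast r x).symm

theorem hasSkolemFunctions_ultrapower {L' : FirstOrder.Language.{u', v'}} [L'.Structure M]
    [Nonempty M] (h : HasSkolemFunctions L L' M) :
    HasSkolemFunctions L L' ((u : Filter ι).Product fun _ => M) := by
  intro n φ
  obtain ⟨f, hf⟩ := h φ
  have realize_snoc (x : Fin n → ι → M) (a : ι → M) :
      φ.Realize default (Fin.snoc (fun i => (x i : (u : Filter ι).Product fun _ => M))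
        (a : (u : Filter ι).Product fun _ => M) : Fin (n + 1) → _) ↔
      ∀ᶠ k in u, φ.Realize default (Fin.snoc (fun i => x i k) (a k) : Fin (n + 1) → M) := by
    have cast_snoc : (Fin.snoc (fun i => (x i : (u : Filter ι).Product fun _ => M))
        (a : (u : Filter ι).Product fun _ => M) : Fin (n + 1) → _) =
        fun i => ((Fin.snoc x a : Fin (n + 1) → ι → M) i : (u : Filter ι).Product fun _ => M) :=
      (Fin.comp_snoc (fun b : ι → M => (b : (u : Filter ι).Product fun _ => M)) x a).symm
    have snoc_apply (k : ι) : (Fin.snoc (fun i => x i k) (a k) : Fin (n + 1) → M) =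
        fun i => (Fin.snoc x a : Fin (n + 1) → ι → M) i k :=
      (Fin.comp_snoc (fun b : ι → M => b k) x a).symm
    simp only [cast_snoc, snoc_apply]
    convert! Ultraproduct.boundedFormula_realize_cast (u := u) (M := fun _ => M) φ Empty.elim
      (Fin.snoc x a)
  refine ⟨f, fun x a hx => ?_⟩
  induction x using Quotient.induction_on_pi with | _ x
  induction a using Quotient.inductionOn with | _ a
  exact Ultraproduct.funMap_cast (u := u) (M := fun _ => M) f x ▸
    (realize_snoc x _).2 (((realize_snoc x a).1 hx).mono fun k => hf _ _)

/-- The diagonal elementary embedding of a structure into its ultrapower. -/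
def diagonalEmbedding (L : FirstOrder.Language.{u, v}) (M : Type w) [L.Structure M] [Nonempty M]
    (u : Ultrafilter ι) : M ↪ₑ[L] (u : Filter ι).Product fun _ => M where
  toFun a := ((fun _ => a : ι → M) : (u : Filter ι).Product fun _ => M)
  map_formula' n φ x := by
    refine (Ultraproduct.realize_formula_cast (u := u) (M := fun _ => M) φ
      fun i _ => x i).trans ?_
    simp

theorem range_diagonalEmbedding_subset_skolemHull {L' : FirstOrder.Language.{u', v'}}
    [L'.Structure M] [Nonempty M] (φ : L →ᴸ L') [φ.IsExpansionOn M]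
    (hL' : HasSkolemFunctions L L' ((u : Filter ι).Product fun _ => M))
    (hconst : ∀ a : M, ∃ f : L'.Functions 0, funMap f default = a)
    (s : Set ((u : Filter ι).Product fun _ => M)) :
    Set.range (diagonalEmbedding L M u) ⊆ (skolemHull φ hL' s : Set _) := by
  rintro _ ⟨a, rfl⟩
  obtain ⟨f, rfl⟩ := hconst a
  have funMap_diagonal := Ultraproduct.funMap_cast (u := u) (M := fun _ => M) f
    fun (i : Fin 0) (_ : ι) => (default : Fin 0 → M) i
  exact Set.mem_of_eq_of_mem funMap_diagonal.symm
    ((Substructure.closure L' s).fun_mem f _ fun i => i.elim0)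

end Ultrapower

end SkolemHull

section IndependentExtension

open Cardinal Filter Function

theorem eventually_injOn_restrict {V α : Type*} {r : V → ℕ → α} (hr : Injective r) {s : Set V}
    (hs : s.Finite) : ∀ᶠ l in atTop, s.InjOn fun x (i : Fin l) => r x i := by
  have separated (x y : V) :
      ∀ᶠ l in atTop, (fun i : Fin l => r x i) = (fun i : Fin l => r y i) → x = y := by
    by_cases hxy : x = y
    · exact .of_forall fun _ _ => hxy
    · obtain ⟨d, hd⟩ := ne_iff.1 (hr.ne hxy)
      exact (eventually_gt_atTop d).mono fun l hl h => absurd (congrFun h ⟨d, hl⟩) hd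
  exact (eventually_all_finite hs).2 fun x _ =>
    (eventually_all_finite hs).2 fun y _ => separated x y

theorem StringsIndependent.exists_ne_of_injOn {V : Type*} {r : V → ℕ → Bool} {k : ℕ → ℕ} {n m : ℕ}
    {h : ℕ → ℕ} {g : ∀ s, (Fin (k s) → Fin m → Bool) → Fin m → Bool}
    {v : (Fin n → Bool) → Fin m → Bool} (hv : StringsIndependent h g v) {l s : ℕ} (hl : l ≤ n)
    (hs : s < l) {y : Fin (k s) → V} {x : V} (hx : x ∉ Set.range y)
    (hinj : (insert x (Set.range y)).InjOn fun z (i : Fin l) => r z i) :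
    ∃ i : Fin m, i < h l ∧ g s (fun j => v fun i => r (y j) i) i ≠ v (fun i => r x i) i := by
  let node (z : V) (i : Fin n) : Bool := r z i
  have hcast : (insert x (Set.range y)).InjOn ((· ∘ Fin.castLE hl) ∘ node) := hinj
  refine hv l hl s hs (node ∘ y) (node x) ?_ ?_
  · rintro ⟨j, hj⟩
    exact hx ⟨j, hcast.of_comp (Set.mem_insert_of_mem x ⟨j, rfl⟩) (Set.mem_insert x _) hj⟩
  · rw [Set.range_comp, ← Set.image_insert_eq]
    exact hcast.image_of_comp

universe u v w

section Ultrapower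

variable {L : FirstOrder.Language.{u, v}} {M : Type w} [L.Structure M]

theorem eventually_iff_iff {ι : Type*} {u : Ultrafilter ι} {p q : ι → Prop} :
    (∀ᶠ n in u, (p n ↔ q n)) ↔ ((∀ᶠ n in u, p n) ↔ ∀ᶠ n in u, q n) := by
  simp only [iff_def, eventually_and, Ultrafilter.eventually_imp]

theorem realize_ultrapower_cast {ι : Type*} {u : Ultrafilter ι} [Nonempty M]
    {φ : L.Formula (Fin 1)} (f : ι → M) :
    (φ.Realize fun _ => (f : (u : Filter ι).Product fun _ => M)) ↔
      ∀ᶠ n in u, φ.Realize fun _ => f n :=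
  Ultraproduct.realize_formula_cast (u := u) (M := fun _ => M) φ fun _ => f

/-- An elementary embedding with values in an elementary substructure, as an elementary embedding
into that substructure. -/
def codRestrict {N : Type*} [L.Structure N] (e : M ↪ₑ[L] N) (S : L.ElementarySubstructure N)
    (h : ∀ a, e a ∈ S) : M ↪ₑ[L] S where
  toFun a := ⟨e a, h a⟩
  map_formula' _ φ x := (S.subtype.map_formula φ _).symm.trans (e.map_formula φ x)

theorem exists_countable_extension_realizing [Nonempty M] [Countable M] [Countable L.Symbols]
    {β : Type*} [Countable β] (p : β → ℕ → L.Formula (Fin 1))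
    (hp : ∀ b n, ∃ a : M, ∀ i < n, (p b i).Realize fun _ => a) :
    ∃ (N : Type w) (_ : L.Structure N) (_ : M ↪ₑ[L] N), Countable N ∧
      ∀ b, ∃ a : N, ∀ i, (p b i).Realize fun _ => a := by
  obtain ⟨L', φ, _, _, skolem, _, hconst⟩ := exists_countable_skolem_expansion L M
  have skolemN := hasSkolemFunctions_ultrapower (u := hyperfilter ℕ) skolem
  choose a ha using hp
  let c (b : β) : (hyperfilter ℕ : Filter ℕ).Product fun _ => M := a b
  let S := skolemHull φ skolemN (Set.range c)
  have countable_S : #S ≤ ℵ₀ := (mk_skolemHull_le φ skolemN _).trans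
    (max_le le_rfl (mk_le_aleph0_iff.2 (Set.countable_range c)))
  refine ⟨S, inferInstance, codRestrict (diagonalEmbedding L M _) S fun m =>
    range_diagonalEmbedding_subset_skolemHull φ skolemN hconst _ ⟨m, rfl⟩,
    mk_le_aleph0_iff.1 countable_S, fun b => ⟨⟨c b, Substructure.subset_closure ⟨b, rfl⟩⟩,
      fun i => (S.subtype.map_formula (p b i) _).1 ((realize_ultrapower_cast (a b)).2 ?_)⟩⟩
  exact ((eventually_gt_atTop i).filter_mono Nat.hyperfilter_le_atTop).mono (ha b · i)

end Ultrapower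

section Patterns

variable {L : FirstOrder.Language.{u, v}}

/-- The formulas `δ i` can be made true and false in `M` according to any finite `0`-`1` pattern. -/
def RealizesPatterns (δ : ℕ → L.Formula (Fin 1)) (M : Type*) [L.Structure M] : Prop :=
  ∀ (m : ℕ) (w : Fin m → Bool), ∃ a : M, ∀ i : Fin m, (δ i).Realize (fun _ => a) ↔ w i = true

variable {V : Type*} {r : V → ℕ → Bool} {M : Type w} [L.Structure M] {δ : ℕ → L.Formula (Fin 1)}

theorem RealizesPatterns.map {N : Type*} [L.Structure N] (hδ : RealizesPatterns δ M)
    (f : M ↪ₑ[L] N) : RealizesPatterns δ N := fun m w =>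
  let ⟨a, ha⟩ := hδ m w
  ⟨f a, fun i => (f.map_formula (δ i) fun _ => a).trans (ha i)⟩

theorem RealizesPatterns.exists_independent_sequences [Countable (Σ n, L.Functions n)]
    (hδ : RealizesPatterns δ M) (hr : Injective r) :
    ∃ c : V → ℕ → M, ∀ {k : ℕ} (t : L.Term (Fin k)) (y : Fin k → V) (x : V), x ∉ Set.range y →
      ∃ b, ∀ᶠ n in atTop, ∃ i < b,
        ¬ ((δ i).Realize (fun _ => c x n) ↔
          (δ i).Realize fun _ => t.realize fun j => c (y j) n) := by
  classical
  choose code realize_code using hδ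
  have : Nonempty (Σ k, L.Term (Fin k)) := ⟨1, Term.var 0⟩
  obtain ⟨e, he⟩ := exists_surjective_nat (Σ k, L.Term (Fin k))
  let g (m s : ℕ) (w : Fin (e s).1 → Fin m → Bool) (i : Fin m) : Bool :=
    decide ((δ i).Realize fun _ => (e s).2.realize (code m ∘ w))
  obtain ⟨h, hh⟩ := exists_stringsIndependent fun s => (e s).1
  let m (n : ℕ) : ℕ := (Finset.range (n + 1)).sup h
  choose v hv using fun n => hh (n := n) (m := m n)
    (fun l hl => Finset.le_sup (Finset.mem_range_succ_iff.2 hl)) (g (m n))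
  let c (x : V) (n : ℕ) : M := code (m n) (v n fun i => r x i)
  suffices ∀ (q : Σ k, L.Term (Fin k)) (y : Fin q.1 → V) (x : V), x ∉ Set.range y →
      ∃ b, ∀ᶠ n in atTop, ∃ i < b, ¬ ((δ i).Realize (fun _ => c x n) ↔
        (δ i).Realize fun _ => q.2.realize fun j => c (y j) n) from ⟨c, fun t => this ⟨_, t⟩⟩
  refine he.forall.2 fun s y x hx => ?_
  obtain ⟨l, hinj, hsl⟩ := ((eventually_injOn_restrict hr ((Set.finite_range y).insert x)).and
    (eventually_gt_atTop s)).exists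
  refine ⟨h l, (eventually_ge_atTop l).mono fun n hln => ?_⟩
  obtain ⟨i, hi, differ⟩ := (hv n).exists_ne_of_injOn hln hsl hx hinj
  refine ⟨i, hi, fun agree => differ (Bool.eq_iff_iff.2 ?_)⟩
  exact decide_eq_true_iff.trans (agree.symm.trans (realize_code _ _ i))

theorem RealizesPatterns.exists_independent_family_ultrapower [Nonempty M]
    [Countable (Σ n, L.Functions n)] (hδ : RealizesPatterns δ M) (hr : Injective r) :
    ∃ c : V → (hyperfilter ℕ : Filter ℕ).Product fun _ => M,
      ∀ {k : ℕ} (t : L.Term (Fin k)) (y : Fin k → V) (x : V), x ∉ Set.range y →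
        ∃ i, ¬ ((δ i).Realize (fun _ => c x) ↔ (δ i).Realize fun _ => t.realize (c ∘ y)) := by
  obtain ⟨c, hc⟩ := hδ.exists_independent_sequences hr
  refine ⟨fun x => (c x : (hyperfilter ℕ : Filter ℕ).Product fun _ => M), fun {k} t y x hx => ?_⟩
  by_contra! agree
  have realize_t := Ultraproduct.term_realize_cast (u := hyperfilter ℕ) (M := fun _ => M)
    (fun j => c (y j)) t
  have agree_seq (i : ℕ) : ∀ᶠ n in hyperfilter ℕ,
      ((δ i).Realize (fun _ => c x n) ↔ (δ i).Realize fun _ => t.realize fun j => c (y j) n) := by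
    rw [eventually_iff_iff, ← realize_ultrapower_cast, ← realize_ultrapower_cast, ← realize_t]
    exact agree i
  obtain ⟨b, differ⟩ := hc t y x hx
  obtain ⟨n, agree_n, i, hi, differ_i⟩ :=
    (((eventually_all_finite (Set.finite_Iio b)).2 fun i _ => agree_seq i).and
      (differ.filter_mono Nat.hyperfilter_le_atTop)).exists
  exact differ_i (agree_n i hi)

theorem RealizesPatterns.exists_independent_hulls [Nonempty M] [Countable M] [Countable L.Symbols]
    (hδ : RealizesPatterns δ M) (hr : Injective r) :
    ∃ (N : Type w) (_ : L.Structure N) (e : M ↪ₑ[L] N) (c : V → N)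
      (H : Set N → L.ElementarySubstructure N),
      (∀ s, Set.range e ⊆ (H s : Set N)) ∧ (∀ s, s ⊆ (H s : Set N)) ∧
      (∀ s t, s ⊆ t → (H s : Set N) ⊆ (H t : Set N)) ∧
      (∀ s, #(H s) ≤ max ℵ₀ #s) ∧
      ∀ (x : V) (X : Set V), x ∉ X → ∀ a ∈ H (c '' X),
        ∃ i, ¬ ((δ i).Realize (fun _ => c x) ↔ (δ i).Realize fun _ => a) := by
  obtain ⟨L', φ, _, hφ, skolem, _, hconst⟩ := exists_countable_skolem_expansion L M
  have realize_φ (N : Type w) [L.Structure N] [L'.Structure N] [φ.IsExpansionOn N] (i : ℕ) (a : N) :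
      (φ.onFormula (δ i)).Realize (fun _ => a) ↔ (δ i).Realize fun _ => a := φ.realize_onFormula _
  have hδ' : RealizesPatterns (fun i => φ.onFormula (δ i)) M := by
    simpa only [RealizesPatterns, realize_φ] using hδ
  obtain ⟨c, hc⟩ := hδ'.exists_independent_family_ultrapower hr
  have skolemN := hasSkolemFunctions_ultrapower (u := hyperfilter ℕ) skolem
  refine ⟨_, inferInstance, diagonalEmbedding L M (hyperfilter ℕ), c, skolemHull φ skolemN,
    range_diagonalEmbedding_subset_skolemHull φ skolemN hconst,
    fun s => Substructure.subset_closure, fun s t => (Substructure.closure_mono ·),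
    mk_skolemHull_le φ skolemN, fun x X hx a ha => ?_⟩
  obtain ⟨k, t, y, hy, rfl⟩ := exists_term_fin_of_mem_closure ha
  simpa only [realize_φ] using hc t y x fun ⟨j, hj⟩ => hx (hj ▸ hy j)

end Patterns

end IndependentExtension

namespace Arith

open Cardinal Function

section PeanoArithmetic

variable {M : Type*} [arith.Structure M] {α : Type*}

instance : Zero (arith.Term α) := ⟨Constants.term (L := arith) arithFunc.zero⟩

instance : One (arith.Term α) := ⟨Constants.term (L := arith) arithFunc.one⟩

instance : Add (arith.Term α) := ⟨Functions.apply₂ (L := arith) arithFunc.add⟩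

instance : Mul (arith.Term α) := ⟨Functions.apply₂ (L := arith) arithFunc.mul⟩

theorem realize_zero (v : α → M) : (0 : arith.Term α).realize v = zeroM M :=
  congrArg (Structure.funMap (L := arith) arithFunc.zero) (Subsingleton.elim _ _)

theorem realize_one (v : α → M) : (1 : arith.Term α).realize v = oneM M :=
  congrArg (Structure.funMap (L := arith) arithFunc.one) (Subsingleton.elim _ _)

theorem realize_add (v : α → M) (s t : arith.Term α) :
    (s + t).realize v = addM (s.realize v) (t.realize v) := Term.realize_functions_apply₂

theorem realize_mul (v : α → M) (s t : arith.Term α) :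
    (s * t).realize v = mulM (s.realize v) (t.realize v) := Term.realize_functions_apply₂

/-- The closed term denoting a numeral. -/
def numeralTerm : ℕ → arith.Term α
  | 0 => 0
  | n + 1 => numeralTerm n + 1

theorem realize_numeralTerm (v : α → M) (n : ℕ) : (numeralTerm n).realize v = numeral M n := by
  induction n with
  | zero => exact realize_zero v
  | succ n ih => rw [numeralTerm, realize_add, realize_one, ih, numeral]

/-- The symbol `<` of the language of arithmetic. -/
def ltSymb : arith.Relations 2 := arithRel.lt

/-- The formula expressing that an element is a given numeral. -/
def numeralFormula (n : ℕ) : arith.Formula (Fin 1) := Term.equal (Term.var 0) (numeralTerm n)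

theorem realize_numeralFormula {n : ℕ} {a : M} :
    (numeralFormula n).Realize (fun _ => a) ↔ a = numeral M n := by
  rw [numeralFormula, Formula.realize_equal, realize_numeralTerm, Term.realize_var]

/-- The formula expressing that a given binary digit of an element is `1`. -/
def digitFormula (i : ℕ) : arith.Formula (Fin 1) :=
  let x : arith.Term (Fin 1 ⊕ Fin 2) := Term.var (Sum.inl 0)
  let u : arith.Term (Fin 1 ⊕ Fin 2) := Term.var (Sum.inr 0)
  let v : arith.Term (Fin 1 ⊕ Fin 2) := Term.var (Sum.inr 1)
  (x.bdEqual (u * numeralTerm (2 ^ (i + 1)) + (numeralTerm (2 ^ i) + v)) ⊓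
    ltSymb.boundedFormula₂ v (numeralTerm (2 ^ i))).ex.ex

theorem realize_digitFormula {i : ℕ} {a : M} :
    (digitFormula i).Realize (fun _ => a) ↔ digitB a i := by
  simp only [digitFormula, Formula.Realize, BoundedFormula.realize_ex, BoundedFormula.realize_inf,
    BoundedFormula.realize_bdEqual, BoundedFormula.realize_rel₂, realize_add, realize_mul,
    realize_numeralTerm]
  exact Iff.rfl

section ElementaryEmbedding

variable {N : Type*} [arith.Structure N]

theorem map_eq_numeral_iff (f : M ↪ₑ[arith] N) {a : M} {n : ℕ} :
    f a = numeral N n ↔ a = numeral M n := by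
  rw [← realize_numeralFormula, ← realize_numeralFormula]
  exact f.map_formula (numeralFormula n) fun _ => a

theorem isStd_map_iff (f : M ↪ₑ[arith] N) {a : M} : IsStd (f a) ↔ IsStd a :=
  exists_congr fun _ => map_eq_numeral_iff f

theorem digitB_map_iff (f : M ↪ₑ[arith] N) {a : M} {i : ℕ} : digitB (f a) i ↔ digitB a i := by
  rw [← realize_digitFormula, ← realize_digitFormula]
  exact f.map_formula (digitFormula i) fun _ => a

theorem SSy_subset_of_elementaryEmbedding (f : M ↪ₑ[arith] N) : SSy M ⊆ SSy N :=
  fun _ ⟨a, ha, hX⟩ =>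
    ⟨f a, (isStd_map_iff f).not.2 ha, fun i => (hX i).trans (digitB_map_iff f).symm⟩

theorem mem_SSy_elementarySubstructure_iff {S : arith.ElementarySubstructure M} {X : Set ℕ} :
    X ∈ SSy S ↔ ∃ a ∈ S, ¬ IsStd a ∧ ∀ i, i ∈ X ↔ digitB a i := by
  simp only [SSy, Set.mem_ofPred_eq, Subtype.exists, ← isStd_map_iff S.subtype,
    ← digitB_map_iff S.subtype, exists_prop, ElementarySubstructure.subtype_apply]

end ElementaryEmbedding

theorem mk_SSy_le (M : Type) [arith.Structure M] : #(SSy M) ≤ #M := by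
  have coded : SSy M ⊆ Set.range fun a : M => {i | digitB a i} :=
    fun X ⟨a, _, hX⟩ => ⟨a, Set.ext fun i => (hX i).symm⟩
  exact (mk_le_mk_of_subset coded).trans mk_range_le

theorem IsPAModel.addM_zeroM (hM : IsPAModel M) (x : M) : addM x (zeroM M) = x := hM.1 x

theorem IsPAModel.addM_succ (hM : IsPAModel M) (x y : M) :
    addM x (addM y (oneM M)) = addM (addM x y) (oneM M) := hM.2.1 x y

theorem IsPAModel.mulM_zeroM (hM : IsPAModel M) (x : M) : mulM x (zeroM M) = zeroM M := hM.2.2.1 x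

theorem IsPAModel.mulM_succ (hM : IsPAModel M) (x y : M) :
    mulM x (addM y (oneM M)) = addM (mulM x y) x := hM.2.2.2.1 x y

theorem IsPAModel.not_ltM_zeroM (hM : IsPAModel M) (x : M) : ¬ ltM x (zeroM M) := hM.2.2.2.2.1 x

theorem IsPAModel.ltM_succ_iff (hM : IsPAModel M) {x y : M} :
    ltM x (addM y (oneM M)) ↔ ltM x y ∨ x = y := hM.2.2.2.2.2.1 x y

theorem IsPAModel.succ_ne_zeroM (hM : IsPAModel M) (x : M) : addM x (oneM M) ≠ zeroM M :=
  hM.2.2.2.2.2.2.1 x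

theorem IsPAModel.succ_injective (hM : IsPAModel M) : Injective fun x : M => addM x (oneM M) :=
  hM.2.2.2.2.2.2.2.1

theorem IsPAModel.induction_formula (hM : IsPAModel M) (φ : arith.Formula (Fin 1))
    (zero : φ.Realize fun _ => zeroM M)
    (succ : ∀ x : M, (φ.Realize fun _ => x) → φ.Realize fun _ => addM x (oneM M)) (x : M) :
    φ.Realize fun _ => x := by
  refine hM.2.2.2.2.2.2.2.2 {x | φ.Realize fun _ => x} ?_ zero succ x
  refine Set.Definable.mono (Set.empty_definable_iff.2 ⟨φ, ?_⟩) (Set.empty_subset _)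
  ext v
  exact iff_of_eq (congrArg φ.Realize (funext fun i => congrArg v (Subsingleton.elim _ _)))

theorem IsPAModel.eq_zeroM_or_eq_succ (hM : IsPAModel M) (x : M) :
    x = zeroM M ∨ ∃ y, addM y (oneM M) = x := by
  let zero : arith.Formula (Fin 1) := (Term.var 0).equal 0
  let succ : arith.Formula (Fin 1) :=
    (Term.bdEqual (Term.var (Sum.inr 0) + 1) (Term.var (Sum.inl 0))).ex
  have realize_or (x : M) : (zero ⊔ succ).Realize (fun _ => x) ↔
      x = zeroM M ∨ ∃ y, addM y (oneM M) = x := by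
    rw [Formula.realize_sup, Formula.realize_equal, realize_zero]
    simp only [succ, Formula.Realize, BoundedFormula.realize_ex, BoundedFormula.realize_bdEqual,
      realize_add, realize_one]
    exact Iff.rfl
  exact (realize_or x).1 <| hM.induction_formula _ ((realize_or _).2 (.inl rfl))
    (fun y _ => (realize_or _).2 (.inr ⟨y, rfl⟩)) x

theorem IsPAModel.numeral_add (hM : IsPAModel M) (a b : ℕ) :
    numeral M (a + b) = addM (numeral M a) (numeral M b) := by
  induction b with
  | zero => exact (hM.addM_zeroM _).symm
  | succ b ih => rw [← Nat.add_assoc, numeral, ih, numeral, hM.addM_succ]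

theorem IsPAModel.numeral_mul (hM : IsPAModel M) (a b : ℕ) :
    numeral M (a * b) = mulM (numeral M a) (numeral M b) := by
  induction b with
  | zero => exact (hM.mulM_zeroM _).symm
  | succ b ih => rw [Nat.mul_succ, hM.numeral_add, ih, numeral, hM.mulM_succ]

theorem IsPAModel.numeral_injective (hM : IsPAModel M) : Injective (numeral M) := by
  intro a
  induction a with
  | zero =>
    rintro (_ | b) h
    · rfl
    · exact absurd h.symm (hM.succ_ne_zeroM _)
  | succ a ih =>
    rintro (_ | b) h
    · exact absurd h (hM.succ_ne_zeroM _)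
    · rw [ih (hM.succ_injective h)]

theorem IsPAModel.ltM_numeral_iff (hM : IsPAModel M) {x : M} {b : ℕ} :
    ltM x (numeral M b) ↔ ∃ a < b, x = numeral M a := by
  induction b with
  | zero => simp [numeral, hM.not_ltM_zeroM]
  | succ b ih =>
    rw [numeral, hM.ltM_succ_iff, ih, Nat.exists_lt_succ_right]

theorem IsPAModel.isStd_of_addM_left (hM : IsPAModel M) {x y : M} (h : IsStd (addM x y)) :
    IsStd y := by
  obtain ⟨n, h⟩ := h
  induction n generalizing y with
  | zero =>
    rcases hM.eq_zeroM_or_eq_succ y with rfl | ⟨z, rfl⟩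
    · exact ⟨0, rfl⟩
    · rw [hM.addM_succ] at h
      exact absurd h (hM.succ_ne_zeroM _)
  | succ n ih =>
    rcases hM.eq_zeroM_or_eq_succ y with rfl | ⟨z, rfl⟩
    · exact ⟨0, rfl⟩
    · rw [hM.addM_succ] at h
      obtain ⟨a, rfl⟩ := ih (hM.succ_injective h)
      exact ⟨a + 1, rfl⟩

theorem IsPAModel.isStd_of_addM_numeral (hM : IsPAModel M) {x : M} {b : ℕ}
    (h : IsStd (addM x (numeral M b))) : IsStd x := by
  induction b with
  | zero => rwa [numeral, hM.addM_zeroM] at h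
  | succ b ih =>
    rw [numeral, hM.addM_succ] at h
    obtain ⟨_ | n, h⟩ := h
    · exact absurd h (hM.succ_ne_zeroM _)
    · exact ih ⟨n, hM.succ_injective h⟩

theorem IsPAModel.isStd_of_mulM_numeral (hM : IsPAModel M) {x : M} {b : ℕ} (hb : b ≠ 0)
    (h : IsStd (mulM x (numeral M b))) : IsStd x := by
  obtain ⟨b, rfl⟩ := Nat.exists_eq_succ_of_ne_zero hb
  rw [Nat.succ_eq_add_one, numeral, hM.mulM_succ] at h
  exact hM.isStd_of_addM_left h

theorem testBit_iff_exists_eq_add {a i : ℕ} :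
    a.testBit i ↔ ∃ u v, a = u * 2 ^ (i + 1) + (2 ^ i + v) ∧ v < 2 ^ i := by
  constructor
  · intro h
    refine ⟨a / 2 ^ (i + 1), a % 2 ^ i, ?_, Nat.mod_lt _ (by positivity)⟩
    have bit : a / 2 ^ i % 2 = 1 := by simpa [Nat.testBit_eq_decide_div_mod_eq] using h
    calc a = a / 2 ^ (i + 1) * 2 ^ (i + 1) + a % 2 ^ (i + 1) := (Nat.div_add_mod' _ _).symm
      _ = a / 2 ^ (i + 1) * 2 ^ (i + 1) + (2 ^ i + a % 2 ^ i) := by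
        rw [Nat.mod_pow_succ, bit, mul_one, add_comm (a % 2 ^ i)]
  · rintro ⟨u, v, rfl, hv⟩
    rw [show u * 2 ^ (i + 1) + (2 ^ i + v) = 2 ^ i * (2 * u + 1) + v by ring,
      Nat.testBit_mul_two_pow_add_eq, Nat.testBit_lt_two_pow hv]
    simp

theorem IsPAModel.digitB_numeral_iff (hM : IsPAModel M) {a i : ℕ} :
    digitB (numeral M a) i ↔ a.testBit i := by
  rw [testBit_iff_exists_eq_add]
  constructor
  · rintro ⟨u, v, h, hv⟩
    obtain ⟨v, hvi, rfl⟩ := hM.ltM_numeral_iff.1 hv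
    rw [← hM.numeral_add] at h
    obtain ⟨u, rfl⟩ := hM.isStd_of_mulM_numeral (pow_ne_zero _ two_ne_zero)
      (hM.isStd_of_addM_numeral ⟨a, h.symm⟩)
    rw [← hM.numeral_mul, ← hM.numeral_add] at h
    exact ⟨u, v, hM.numeral_injective h, hvi⟩
  · rintro ⟨u, v, rfl, hv⟩
    exact ⟨numeral M u, numeral M v, by simp only [hM.numeral_add, hM.numeral_mul],
      hM.ltM_numeral_iff.2 ⟨v, hv, rfl⟩⟩

end PeanoArithmetic

section StandardSystem

instance : Countable arith.Symbols := by
  have functions_injective : Injective fun f : Σ n, arithFunc n => match f with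
      | ⟨_, .zero⟩ => 0
      | ⟨_, .one⟩ => 1
      | ⟨_, .add⟩ => 2
      | ⟨_, .mul⟩ => 3 := by
    rintro ⟨_, _ | _ | _ | _⟩ ⟨_, _ | _ | _ | _⟩ h <;> first | rfl | exact absurd h (by decide)
  have functions_countable : Countable (Σ n, arithFunc n) := functions_injective.countable
  have relations_subsingleton : Subsingleton (Σ n, arithRel n) := ⟨by rintro ⟨_, ⟨⟩⟩ ⟨_, ⟨⟩⟩; rfl⟩
  exact inferInstanceAs (Countable ((Σ n, arithFunc n) ⊕ Σ n, arithRel n))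

universe w

variable {M : Type w} [arith.Structure M]

theorem IsPAModel.exists_numeral_digitB_iff_mem (hM : IsPAModel M) (X : Set ℕ) (n : ℕ) :
    ∃ k, ∀ i < n, i < k ∧ (digitB (numeral M k) i ↔ i ∈ X) := by
  classical
  refine ⟨2 ^ n + Nat.ofBits fun i : Fin n => decide (i.1 ∈ X), fun i hi => ⟨?_, ?_⟩⟩
  · exact (hi.trans Nat.lt_two_pow_self).trans_le (Nat.le_add_right _ _)
  · rw [hM.digitB_numeral_iff, Nat.testBit_two_pow_add_gt hi, Nat.testBit_ofBits_lt _ _ hi,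
      decide_eq_true_iff]

theorem IsPAModel.exists_countable_extension_subset_SSy (hM : IsPAModel M) [Countable M]
    {F : Set (Set ℕ)} (hF : F.Countable) :
    ∃ (N : Type w) (_ : arith.Structure N) (_ : M ↪ₑ[arith] N), Countable N ∧ F ⊆ SSy N := by
  classical
  have : Nonempty M := ⟨zeroM M⟩
  have : Countable F := hF
  let p (X : F) (i : ℕ) : arith.Formula (Fin 1) :=
    ∼(numeralFormula i) ⊓ if i ∈ X.1 then digitFormula i else ∼(digitFormula i)
  have realize_p {N : Type w} [arith.Structure N] {X : F} {i : ℕ} {a : N} :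
      (p X i).Realize (fun _ => a) ↔ a ≠ numeral N i ∧ (i ∈ X.1 ↔ digitB a i) := by
    by_cases hi : i ∈ X.1 <;>
      simp [p, hi, Formula.realize_not, realize_numeralFormula, realize_digitFormula]
  obtain ⟨N, _, f, hN, hcode⟩ := exists_countable_extension_realizing p fun X n =>
    let ⟨k, hk⟩ := hM.exists_numeral_digitB_iff_mem X.1 n
    ⟨numeral M k, fun i hi =>
      realize_p.2 ⟨hM.numeral_injective.ne (hk i hi).1.ne', (hk i hi).2.symm⟩⟩
  refine ⟨N, inferInstance, f, hN, fun X hX => ?_⟩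
  obtain ⟨a, ha⟩ := hcode ⟨X, hX⟩
  exact ⟨a, fun ⟨n, hn⟩ => (realize_p.1 (ha n)).1 hn, fun i => (realize_p.1 (ha i)).2⟩

theorem IsPAModel.realizesPatterns_digitFormula (hM : IsPAModel M) :
    RealizesPatterns digitFormula M := fun m w => ⟨numeral M (Nat.ofBits w), fun i => by
  rw [realize_digitFormula, hM.digitB_numeral_iff, Nat.testBit_ofBits_lt _ _ i.2]⟩

theorem IsPAModel.exists_independent_elementarySubstructures {V : Type w} (hM : IsPAModel M)
    [Countable M] {F : Set (Set ℕ)} (hF : F.Countable) {r : V → ℕ → Bool} (hr : Injective r) :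
    ∃ (N : Type w) (_ : arith.Structure N) (e : M ↪ₑ[arith] N)
      (S : Set V → arith.ElementarySubstructure N) (G : V → Set ℕ),
      (∀ X, Set.range e ⊆ (S X : Set N)) ∧ (∀ X, F ⊆ SSy (S X)) ∧
      (∀ X Y, X ⊆ Y → (S X : Set N) ⊆ (S Y : Set N)) ∧ (∀ X, #(S X) ≤ max ℵ₀ #X) ∧
      ∀ X x, G x ∈ SSy (S X) ↔ x ∈ X := by
  obtain ⟨M', _, f, _, hF'⟩ := hM.exists_countable_extension_subset_SSy hF
  have : Nonempty M' := ⟨zeroM M'⟩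
  obtain ⟨N, _, e, c, H, range_e, subset_H, H_mono, card_H, independent⟩ :=
    (hM.realizesPatterns_digitFormula.map f).exists_independent_hulls hr
  simp only [realize_digitFormula] at independent
  have not_isStd (x : V) : ¬ IsStd (c x) := by
    rintro ⟨k, hk⟩
    obtain ⟨i, hi⟩ := independent x ∅ (Set.notMem_empty x) (c x)
      (range_e _ ⟨numeral M' k, ((map_eq_numeral_iff e).2 rfl).trans hk.symm⟩)
    exact hi Iff.rfl
  refine ⟨N, inferInstance, e.comp f, fun X => H (c '' X), fun x => {i | digitB (c x) i},
    fun X => ?_, fun X => hF'.trans ?_, fun X Y hXY => H_mono _ _ (Set.image_mono hXY),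
    fun X => (card_H _).trans (max_le_max_left _ mk_image_le),
    fun X x => ⟨fun hG => ?_, fun hx => ?_⟩⟩
  · exact (Set.range_comp_subset_range f e).trans (range_e _)
  · exact SSy_subset_of_elementaryEmbedding (codRestrict e _ fun a => range_e _ ⟨a, rfl⟩)
  · by_contra hx
    obtain ⟨a, ha, -, hG⟩ := mem_SSy_elementarySubstructure_iff.1 hG
    obtain ⟨i, hi⟩ := independent x X hx a ha
    exact hi (hG i)
  · exact mem_SSy_elementarySubstructure_iff.2
      ⟨c x, subset_H _ ⟨x, hx, rfl⟩, not_isStd x, fun _ => Iff.rfl⟩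

theorem SSy_subset_of_subset {S T : arith.ElementarySubstructure M} (h : (S : Set M) ⊆ T) :
    SSy S ⊆ SSy T := fun _ hX =>
  let ⟨a, ha, hXa⟩ := mem_SSy_elementarySubstructure_iff.1 hX
  mem_SSy_elementarySubstructure_iff.2 ⟨a, h ha, hXa⟩

theorem max_aleph0_le_mk_of_mem_iff_mem {V W : Type w} {F : Set V → Set W} {G : V → W}
    (hF : ∀ X, (F X).Infinite) (hG : ∀ X x, G x ∈ F X ↔ x ∈ X)
    (X : Set V) : max ℵ₀ #X ≤ #(F X) := by
  have G_injective : Injective G := fun x y hxy =>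
    (hG {y} x).1 (hxy ▸ (hG {y} y).2 (Set.mem_singleton y))
  exact max_le (aleph0_le_mk_iff.2 (hF X).to_subtype) ((mk_image_eq G_injective).symm.trans_le
    (mk_le_mk_of_subset (Set.image_subset_iff.2 fun x => (hG X x).2)))

end StandardSystem

end Arith

open Arith Cardinal in
theorem statement_13_general (M : Type) [arith.Structure M] (hM : IsPAModel M) (hMc : Countable M)
    (B : Set (Set ℕ)) (hB : B.Countable) :
    ∃ (N' : Type) (_ : arith.Structure N') (e : M ↪ₑ[arith] N')
      (Mfam : Set (Set ℕ) → arith.ElementarySubstructure N'),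
      (∀ X : Set (Set ℕ), Set.range e ⊆ (Mfam X : Set N')) ∧
      (∀ X : Set (Set ℕ), B ⊆ SSy (Mfam X)) ∧
      (∀ X : Set (Set ℕ), #(Mfam X) = max ℵ₀ #X ∧ #(SSy (Mfam X)) = max ℵ₀ #X) ∧
      (∀ X Y : Set (Set ℕ),
        (X ⊆ Y ↔ (Mfam X : Set N') ⊆ (Mfam Y : Set N')) ∧
        (X ⊆ Y ↔ SSy (Mfam X) ⊆ SSy (Mfam Y))) := by
  classical
  have decide_mem_injective : Function.Injective fun (x : Set ℕ) i => decide (i ∈ x) :=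
    fun x y h => Set.ext fun i => decide_eq_decide.1 (congrFun h i)
  obtain ⟨N, _, e, S, G, range_e, subset_SSy, S_mono, card_S, hG⟩ :=
    hM.exists_independent_elementarySubstructures
      (hB.union (Set.countable_range ((↑) : Finset ℕ → Set ℕ))) decide_mem_injective
  have infinite_SSy (X : Set (Set ℕ)) : (SSy (S X)).Infinite :=
    (Set.infinite_range_of_injective Finset.coe_injective).mono
      (Set.subset_union_right.trans (subset_SSy X))
  have le_card_SSy := max_aleph0_le_mk_of_mem_iff_mem infinite_SSy hG
  have subset_of_SSy {X Y} (h : SSy (S X) ⊆ SSy (S Y)) : X ⊆ Y := fun x hx =>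
    (hG Y x).1 (h ((hG X x).2 hx))
  exact ⟨N, inferInstance, e, S, range_e, fun X => Set.subset_union_left.trans (subset_SSy X),
    fun X => ⟨(card_S X).antisymm ((le_card_SSy X).trans (mk_SSy_le _)),
      ((mk_SSy_le _).trans (card_S X)).antisymm (le_card_SSy X)⟩,
    fun X Y => ⟨⟨S_mono X Y, fun h => subset_of_SSy (SSy_subset_of_subset h)⟩,
      ⟨fun h => SSy_subset_of_subset (S_mono X Y h), subset_of_SSy⟩⟩⟩

open Arith in
/-- (`ZFC + MA`) If `M` is a countable non-standard model of `PA`, `|A| < 2^ω`, and `B`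
is countable with the Turing ideal generated by `SSy(M) ∪ B` disjoint from `A`, then
there is a family `(M_X : X ⊆ 2^ω)` of elementary extensions of `M` with
`B ⊆ SSy(M_X)`, `|M_X| = |SSy(M_X)| = max{ω, |X|}`, and
`X ⊆ Y ⟺ M_X ≼ M_Y ⟺ SSy(M_X) ⊆ SSy(M_Y)`. -/
theorem statement_13 (ma : MartinsAxiom)
    (M : Type) [arith.Structure M] (hM : NonstandardModel M) (hMc : Countable M)
    (A : Set (Set ℕ)) (hA : Cardinal.mk A < 2 ^ Cardinal.aleph0)
    (B : Set (Set ℕ)) (hB : B.Countable)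
    (hdisj : tIdealGen (SSy M ∪ B) ∩ A = ∅) :
    ∃ (N' : Type) (_ : arith.Structure N') (e : M ↪ₑ[arith] N')
      (Mfam : Set (Set ℕ) → arith.ElementarySubstructure N'),
      (∀ X : Set (Set ℕ), Set.range e ⊆ (Mfam X : Set N')) ∧
      (∀ X : Set (Set ℕ), B ⊆ SSy (Mfam X)) ∧
      (∀ X : Set (Set ℕ),
        Cardinal.mk (Mfam X) = max Cardinal.aleph0 (Cardinal.mk X) ∧
        Cardinal.mk (SSy (Mfam X)) = max Cardinal.aleph0 (Cardinal.mk X)) ∧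
      (∀ X Y : Set (Set ℕ),
        (X ⊆ Y ↔ (Mfam X : Set N') ⊆ (Mfam Y : Set N')) ∧
        (X ⊆ Y ↔ SSy (Mfam X) ⊆ SSy (Mfam Y))) := by
  exact statement_13_general M hM.1 hMc B hB
end
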